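/- arXiv:2108.01588 — 7 statements merged into one kernel-verified Lean document; each statement's English description precedes it below -/
import Mathlib

section
/- Let d be a positive natural number and T₂ : M_d → M_d a linear map such that (T₂ ⊗ id_d)(a) is separable for every PPT matrix a indexed by Fin d × Fin d. Then for every positive linear map T₁ : M_d → M_d, the composition T₁ ∘ T₂ is decomposable. -/
/-! The Choi matrices of the decomposable maps form the cone `K` of all `P + Γ(Q)` with `P`, `Q`
PSD. This cone is closed (`isClosed_decompSet`): `Γ` preserves the trace, and PSD matrices of
bounded trace form a compact set. If the Hermitian Choi matrix of a map `T` lay outside `K`, a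
separating functional would be the pairing with a Hermitian matrix `a`. Nonnegativity on `K` says
exactly that `a` is PPT (`mem_decompSet_of_pairing_nonneg`).

The pairing of `a` with the Choi matrix of `T` is the quadratic form of `(T ⊗ id_d)(a)` at the
vector `∑ i, e_i ⊗ e_i`. So `T` is decomposable as soon as `T ⊗ id_d` maps PPT matrices to PSD
matrices (`isDecomposable_of_ppt`). The composition `T = T₁ ∘ T₂` has this property: `T₂ ⊗ id_d`
makes a PPT matrix separable, `∑ p_k ⊗ q_k`, and `T₁ ⊗ id_d` maps that to the PSD matrix
`∑ T₁(p_k) ⊗ q_k`. -/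

open Matrix Kronecker ComplexOrder

/-- `T ⊗ id_n` acting blockwise: `((T ⊗ id_n) a)((i,k),(j,l)) = (T a_{kl})(i,j)`
where `a_{kl}(s,t) = a((s,k),(t,l))`. -/
def tensorExt (d n : ℕ) (T : Matrix (Fin d) (Fin d) ℂ → Matrix (Fin d) (Fin d) ℂ)
    (a : Matrix (Fin d × Fin n) (Fin d × Fin n) ℂ) :
    Matrix (Fin d × Fin n) (Fin d × Fin n) ℂ :=
  Matrix.of fun p q => T (Matrix.of fun s t => a (s, p.2) (t, q.2)) p.1 q.1

/-- Partial transpose on the second factor: `Γ(a)((i,k),(j,l)) = a((i,l),(j,k))`. -/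
def ptrans (d n : ℕ) (a : Matrix (Fin d × Fin n) (Fin d × Fin n) ℂ) :
    Matrix (Fin d × Fin n) (Fin d × Fin n) ℂ :=
  Matrix.of fun p q => a (p.1, q.2) (q.1, p.2)

/-- PPT matrix: both `a` and its partial transpose are PSD. -/
def IsPPTState (d n : ℕ) (a : Matrix (Fin d × Fin n) (Fin d × Fin n) ℂ) : Prop :=
  a.PosSemidef ∧ (ptrans d n a).PosSemidef

/-- Separable: a finite sum of Kronecker products of PSD matrices. -/
def SepState (d n : ℕ) (a : Matrix (Fin d × Fin n) (Fin d × Fin n) ℂ) : Prop :=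
  ∃ (N : ℕ) (p : Fin N → Matrix (Fin d) (Fin d) ℂ) (q : Fin N → Matrix (Fin n) (Fin n) ℂ),
    (∀ k, (p k).PosSemidef ∧ (q k).PosSemidef) ∧ a = ∑ k, (p k) ⊗ₖ (q k)

/-- A positive map sends PSD matrices to PSD matrices. -/
def IsPosMap (d : ℕ) (T : Matrix (Fin d) (Fin d) ℂ → Matrix (Fin d) (Fin d) ℂ) : Prop :=
  ∀ a : Matrix (Fin d) (Fin d) ℂ, a.PosSemidef → (T a).PosSemidef

/-- Completely positive: `T ⊗ id_n` preserves positive semidefiniteness for every `n`. -/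
def IsCP (d : ℕ) (T : Matrix (Fin d) (Fin d) ℂ → Matrix (Fin d) (Fin d) ℂ) : Prop :=
  ∀ (n : ℕ) (a : Matrix (Fin d × Fin n) (Fin d × Fin n) ℂ),
    a.PosSemidef → (tensorExt d n T a).PosSemidef

/-- Copositive: `t ∘ T` is completely positive, where `t` is the transpose map. -/
def IsCoP (d : ℕ) (T : Matrix (Fin d) (Fin d) ℂ → Matrix (Fin d) (Fin d) ℂ) : Prop :=
  IsCP d (fun a => (T a)ᵀ)

/-- PPT map: both completely positive and copositive. -/
def IsPPTMap (d : ℕ) (T : Matrix (Fin d) (Fin d) ℂ → Matrix (Fin d) (Fin d) ℂ) : Prop :=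
  IsCP d T ∧ IsCoP d T

/-- Decomposable: a sum of a CP map and the transpose composed with a CP map. -/
def IsDecomposable (d : ℕ) (T : Matrix (Fin d) (Fin d) ℂ → Matrix (Fin d) (Fin d) ℂ) : Prop :=
  ∃ S₁ S₂ : Matrix (Fin d) (Fin d) ℂ →ₗ[ℂ] Matrix (Fin d) (Fin d) ℂ,
    IsCP d ⇑S₁ ∧ IsCP d ⇑S₂ ∧ ∀ a, T a = S₁ a + (S₂ a)ᵀ

/-! ### Positive semidefinite matrices -/

lemma star_dotProduct_mulVec_eq_sum {ι : Type*} [Fintype ι] (A : Matrix ι ι ℂ) (x : ι → ℂ) :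
    star x ⬝ᵥ (A *ᵥ x) = ∑ p, ∑ q, A p q * (star (x p) * x q) := by
  simp only [dotProduct, mulVec, Pi.star_apply, Finset.mul_sum]
  refine Finset.sum_congr rfl fun p _ => Finset.sum_congr rfl fun q _ => by ring

lemma isClosed_setOf_posSemidef {ι : Type*} [Fintype ι] :
    IsClosed {A : Matrix ι ι ℂ | A.PosSemidef} := by
  have : {A : Matrix ι ι ℂ | A.PosSemidef} =
      {A | Aᴴ = A} ∩ ⋂ x : ι → ℂ, {A | 0 ≤ star x ⬝ᵥ (A *ᵥ x)} := by
    ext A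
    simp only [Set.mem_ofPred_eq, Set.mem_inter_iff, Set.mem_iInter]
    exact posSemidef_iff_dotProduct_mulVec
  rw [this]
  refine IsClosed.inter (isClosed_eq (by fun_prop) (by fun_prop)) (isClosed_iInter fun x => ?_)
  exact isClosed_le continuous_const (by fun_prop)

/-- Every entry of a PSD matrix is bounded by the trace, because its `2 × 2` principal minors
are nonnegative. -/
lemma Matrix.PosSemidef.norm_apply_le_trace {ι : Type*} [Fintype ι] {A : Matrix ι ι ℂ}
    (hA : A.PosSemidef) (i j : ι) : ‖A i j‖ ≤ A.trace.re := by
  have hdiag : ∀ k, 0 ≤ (A k k).re ∧ (A k k).im = 0 := fun k => by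
    have := Complex.nonneg_iff.1 (hA.diag_nonneg (i := k))
    exact ⟨this.1, this.2.symm⟩
  have hle : ∀ k, (A k k).re ≤ A.trace.re := fun k => by
    rw [Matrix.trace, Complex.re_sum]
    exact Finset.single_le_sum (f := fun k => (A k k).re) (fun l _ => (hdiag l).1)
      (Finset.mem_univ k)
  have hdet := (hA.submatrix ![i, j]).det_nonneg
  rw [Matrix.det_fin_two] at hdet
  have hji : A j i = star (A i j) := (hA.isHermitian.apply j i).symm
  simp only [submatrix_apply, cons_val_zero, cons_val_one, hji] at hdet
  have h1 := (Complex.nonneg_iff.1 hdet).1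
  simp only [Complex.sub_re, Complex.mul_re, (hdiag _).2, Complex.star_def, Complex.conj_re,
    Complex.conj_im] at h1
  have h2 : ‖A i j‖ ^ 2 = (A i j).re * (A i j).re + (A i j).im * (A i j).im := by
    rw [Complex.sq_norm, Complex.normSq_apply]
  refine abs_le_of_sq_le_sq' ?_ ((hdiag i).1.trans (hle i)) |>.2
  nlinarith [mul_le_mul (hle i) (hle j) (hdiag j).1 ((hdiag i).1.trans (hle i))]

lemma isCompact_posSemidef_trace_le {ι : Type*} [Fintype ι] (R : ℝ) :
    IsCompact {A : Matrix ι ι ℂ | A.PosSemidef ∧ A.trace.re ≤ R} := by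
  have hbox : IsCompact {A : Matrix ι ι ℂ | ∀ i j, A i j ∈ Metric.closedBall (0 : ℂ) R} := by
    have := isCompact_pi_infinite (X := fun _ : ι => ι → ℂ) fun _ : ι =>
      isCompact_pi_infinite (X := fun _ : ι => ℂ) fun _ : ι => isCompact_closedBall (0 : ℂ) R
    exact this
  refine hbox.of_isClosed_subset ?_ fun A hA i j => ?_
  · exact isClosed_setOf_posSemidef.inter (isClosed_le (f := fun A : Matrix ι ι ℂ => A.trace.re)
      (g := fun _ => R) (by fun_prop) continuous_const)
  · rw [mem_closedBall_zero_iff]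
    exact (hA.1.norm_apply_le_trace i j).trans hA.2

/-! ### The cone of decomposable Choi matrices -/

lemma isHermitian_ptrans {d n : ℕ} {a : Matrix (Fin d × Fin n) (Fin d × Fin n) ℂ}
    (ha : a.IsHermitian) : (ptrans d n a).IsHermitian := by
  ext p q
  exact ha.apply _ _

lemma continuous_ptrans (d n : ℕ) : Continuous (ptrans d n) := by
  refine continuous_matrix fun p q => ?_
  exact continuous_id.matrix_elem _ _

lemma trace_ptrans (d n : ℕ) (a : Matrix (Fin d × Fin n) (Fin d × Fin n) ℂ) :
    (ptrans d n a).trace = a.trace := rfl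

/-- The cone of matrices `P + Γ(Q)` with `P`, `Q` PSD. -/
def decompSet (d : ℕ) : Set (Matrix (Fin d × Fin d) (Fin d × Fin d) ℂ) :=
  {X | ∃ P Q, P.PosSemidef ∧ Q.PosSemidef ∧ X = P + ptrans d d Q}

/-- The cone is closed: since `Γ` preserves the trace, the elements `P + Γ(Q)` of bounded trace
are the image of a compact set of pairs `(P, Q)`. -/
lemma isClosed_decompSet (d : ℕ) : IsClosed (decompSet d) := by
  have hcomp : ∀ R : ℝ, IsClosed (decompSet d ∩ {X | X.trace.re ≤ R}) := fun R => by
    have hK := (isCompact_posSemidef_trace_le (ι := Fin d × Fin d) R).prod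
      (isCompact_posSemidef_trace_le (ι := Fin d × Fin d) R)
    have hf : Continuous fun x : Matrix (Fin d × Fin d) (Fin d × Fin d) ℂ ×
        Matrix (Fin d × Fin d) (Fin d × Fin d) ℂ => x.1 + ptrans d d x.2 :=
      continuous_fst.add ((continuous_ptrans d d).comp continuous_snd)
    have := (hK.image hf).isClosed.inter
      (isClosed_le (f := fun X : Matrix (Fin d × Fin d) (Fin d × Fin d) ℂ => X.trace.re)
        (g := fun _ => R) (by fun_prop) continuous_const)
    convert this using 1
    ext X
    constructor
    · rintro ⟨⟨P, Q, hP, hQ, rfl⟩, hR⟩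
      refine ⟨⟨(P, Q), ?_, rfl⟩, hR⟩
      have hp := (Complex.nonneg_iff.1 hP.trace_nonneg).1
      have hq := (Complex.nonneg_iff.1 hQ.trace_nonneg).1
      simp only [Set.mem_ofPred_eq, trace_add, trace_ptrans, Complex.add_re] at hR
      exact ⟨⟨hP, by dsimp only; linarith⟩, hQ, by dsimp only; linarith⟩
    · rintro ⟨⟨⟨P, Q⟩, ⟨hP, hQ⟩, rfl⟩, hR⟩
      exact ⟨⟨P, Q, hP.1, hQ.1, rfl⟩, hR⟩
  -- A limit point `X` is a limit of elements of trace below `tr X + 1`.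
  refine isClosed_of_closure_subset fun X hX => ?_
  have hopen : IsOpen {Y : Matrix (Fin d × Fin d) (Fin d × Fin d) ℂ |
      Y.trace.re < X.trace.re + 1} := isOpen_lt (by fun_prop) continuous_const
  have h1 : X ∈ closure (decompSet d ∩ {Y | Y.trace.re ≤ X.trace.re + 1}) := by
    have h2 := hopen.inter_closure (Set.mem_inter (lt_add_one X.trace.re) hX)
    refine closure_mono ?_ h2
    rintro Y ⟨hY, hYd⟩
    have h3 : Y.trace.re < X.trace.re + 1 := hY
    exact ⟨hYd, h3.le⟩
  rw [(hcomp _).closure_eq] at h1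
  exact h1.1

/-- The set `decompSet d` as a closed convex cone over `ℝ`, the form required by the separation
theorem. -/
noncomputable def decompCone (d : ℕ) :
    ProperCone ℝ (Matrix (Fin d × Fin d) (Fin d × Fin d) ℂ) where
  carrier := decompSet d
  add_mem' := by
    rintro _ _ ⟨P, Q, hP, hQ, rfl⟩ ⟨P', Q', hP', hQ', rfl⟩
    refine ⟨P + P', Q + Q', hP.add hP', hQ.add hQ', ?_⟩
    ext p q
    simp only [Matrix.add_apply, ptrans, of_apply]
    ring
  zero_mem' := ⟨0, 0, .zero, .zero, by ext p q; simp [ptrans]⟩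
  smul_mem' := by
    rintro c _ ⟨P, Q, hP, hQ, rfl⟩
    refine ⟨(c : ℝ) • P, (c : ℝ) • Q, hP.smul c.2, hQ.smul c.2, ?_⟩
    ext p q
    simp [ptrans]
  isClosed' := isClosed_decompSet d

/-- A real-linear functional on complex matrices is the real part of a complex bilinear pairing. -/
lemma exists_matrix_pairing {ι : Type*} [Fintype ι] [DecidableEq ι]
    (f : Matrix ι ι ℂ →ₗ[ℝ] ℝ) :
    ∃ W : Matrix ι ι ℂ, ∀ X, f X = (∑ p, ∑ q, W p q * X p q).re := by
  -- The entry `W p q` is `f(E_pq) - i f(i E_pq)`, the value at `E_pq` of the complexification of `f`.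
  refine ⟨of fun p q => ⟨f (single p q 1), - f (single p q Complex.I)⟩, fun X => ?_⟩
  have hX : X = ∑ p, ∑ q, ((X p q).re • single p q (1 : ℂ) +
      (X p q).im • single p q Complex.I) := by
    conv_lhs => rw [matrix_eq_sum_single X]
    refine Finset.sum_congr rfl fun p _ => Finset.sum_congr rfl fun q _ => ?_
    rw [smul_single, smul_single, ← single_add]
    congr 1
    simp
  conv_lhs => rw [hX]
  simp only [map_sum, map_add, map_smul, smul_eq_mul, Complex.re_sum, of_apply, Complex.mul_re]
  refine Finset.sum_congr rfl fun p _ => Finset.sum_congr rfl fun q _ => by ring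

/-- The half of cone duality that uses Hahn–Banach: a Hermitian matrix that pairs nonnegatively
with every PPT matrix has the form `P + Γ(Q)`. -/
lemma mem_decompSet_of_pairing_nonneg {d : ℕ} {C : Matrix (Fin d × Fin d) (Fin d × Fin d) ℂ}
    (hC : C.IsHermitian)
    (h : ∀ a, IsPPTState d d a → 0 ≤ (∑ p, ∑ q, a p q * C p q).re) : C ∈ decompSet d := by
  by_contra hCK
  have : LocallyConvexSpace ℝ (Matrix (Fin d × Fin d) (Fin d × Fin d) ℂ) :=
    inferInstanceAs (LocallyConvexSpace ℝ (Fin d × Fin d → Fin d × Fin d → ℂ))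
  obtain ⟨f, hf, hfC⟩ := (decompCone d).hyperplane_separation_point (x₀ := C) hCK
  obtain ⟨W, hW⟩ := exists_matrix_pairing f.toLinearMap
  -- On Hermitian matrices only the Hermitian part of `W` contributes.
  set a : Matrix (Fin d × Fin d) (Fin d × Fin d) ℂ := W + Wᴴ with ha
  have haH : a.IsHermitian := by
    rw [ha, Matrix.IsHermitian, conjTranspose_add, conjTranspose_conjTranspose, add_comm]
  have hpair : ∀ X : Matrix (Fin d × Fin d) (Fin d × Fin d) ℂ, X.IsHermitian →
      ∑ p, ∑ q, a p q * X p q = ((2 * f X : ℝ) : ℂ) := fun X hX => by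
    have h2 : f X = (∑ p, ∑ q, W p q * X p q).re := hW X
    -- `X` Hermitian makes the pairing with `Wᴴ` the conjugate of the pairing with `W`.
    have h3 : ∑ p, ∑ q, Wᴴ p q * X p q = star (∑ p, ∑ q, W p q * X p q) := by
      rw [star_sum, Finset.sum_comm]
      refine Finset.sum_congr rfl fun p _ => ?_
      rw [star_sum]
      refine Finset.sum_congr rfl fun q _ => ?_
      rw [star_mul', conjTranspose_apply, hX.apply]
    simp only [ha, Matrix.add_apply, add_mul, Finset.sum_add_distrib]
    rw [h3, Complex.star_def, Complex.add_conj, h2]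
  have hΓ : ∀ X Y : Matrix (Fin d × Fin d) (Fin d × Fin d) ℂ,
      ∑ p, ∑ q, ptrans d d X p q * Y p q = ∑ p, ∑ q, X p q * ptrans d d Y p q := fun X Y => by
    simp only [Fintype.sum_prod_type, ptrans, of_apply]
    refine Finset.sum_congr rfl fun i _ => ?_
    rw [Finset.sum_comm]
    conv_rhs => rw [Finset.sum_comm]
    exact Finset.sum_congr rfl fun j _ => Finset.sum_comm
  have hnn : ∀ X ∈ decompSet d, X.IsHermitian → 0 ≤ ∑ p, ∑ q, a p q * X p q :=
    fun X hX hXH => by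
      rw [hpair X hXH, Complex.zero_le_real]
      exact mul_nonneg two_pos.le (hf X hX)
  have hrank : ∀ x : Fin d × Fin d → ℂ, (vecMulVec (star x) x).PosSemidef := fun x =>
    posSemidef_vecMulVec_star_self x
  have haPPT : IsPPTState d d a := by
    refine ⟨.of_dotProduct_mulVec_nonneg haH fun x => ?_,
      .of_dotProduct_mulVec_nonneg (isHermitian_ptrans haH) fun x => ?_⟩
    · rw [star_dotProduct_mulVec_eq_sum]
      exact hnn _ ⟨_, 0, hrank x, .zero, by ext p q; simp [ptrans, vecMulVec_apply]⟩
        (hrank x).isHermitian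
    · rw [star_dotProduct_mulVec_eq_sum]
      exact (hnn (ptrans d d (vecMulVec (star x) x)) ⟨0, _, .zero, hrank x, (zero_add _).symm⟩
        (isHermitian_ptrans (hrank x).isHermitian)).trans_eq (hΓ a (vecMulVec (star x) x)).symm
  have := h a haPPT
  rw [hpair C hC, Complex.ofReal_re] at this
  linarith

/-! ### Choi matrices and complete positivity -/

/-- The linear map whose Choi matrix is `P`, that is `E_{st} ↦ (P ((s,i),(t,j)))_{ij}`. -/
def ofChoi (d : ℕ) (P : Matrix (Fin d × Fin d) (Fin d × Fin d) ℂ) :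
    Matrix (Fin d) (Fin d) ℂ →ₗ[ℂ] Matrix (Fin d) (Fin d) ℂ where
  toFun X := of fun i j => ∑ s, ∑ t, X s t * P (s, i) (t, j)
  map_add' X Y := by
    ext i j
    simp [add_mul, Finset.sum_add_distrib]
  map_smul' c X := by
    ext i j
    simp [mul_assoc, Finset.mul_sum]

/-- Summing a PSD block matrix over all its blocks gives a PSD matrix. -/
lemma posSemidef_sum_blocks {σ κ : Type*} [Fintype σ] [Fintype κ]
    {M : Matrix (σ × κ) (σ × κ) ℂ} (hM : M.PosSemidef) :
    (of fun x y => ∑ s, ∑ t, M (s, x) (t, y) : Matrix κ κ ℂ).PosSemidef := by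
  refine .of_dotProduct_mulVec_nonneg ?_ fun v => ?_
  · ext x y
    rw [conjTranspose_apply, of_apply, of_apply, star_sum, Finset.sum_comm]
    simp only [star_sum]
    refine Finset.sum_congr rfl fun s _ => Finset.sum_congr rfl fun t _ => hM.isHermitian.apply _ _
  · have := hM.dotProduct_mulVec_nonneg fun p => v p.2
    rw [star_dotProduct_mulVec_eq_sum] at this ⊢
    simp only [Fintype.sum_prod_type] at this
    refine this.trans_eq ?_
    simp only [of_apply, Finset.sum_mul]
    rw [Finset.sum_comm]
    refine Finset.sum_congr rfl fun x _ => ?_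
    conv_rhs => rw [Finset.sum_comm]
    exact Finset.sum_congr rfl fun s _ => Finset.sum_comm

/-- Choi's theorem, in the direction needed here: `(T ⊗ id)(a)` is the sum of the blocks of a
principal submatrix of `a ⊗ P`, so it is PSD along with `a` and `P`. -/
lemma isCP_ofChoi {d : ℕ} {P : Matrix (Fin d × Fin d) (Fin d × Fin d) ℂ} (hP : P.PosSemidef) :
    IsCP d (ofChoi d P) := fun n _ ha =>
  posSemidef_sum_blocks ((ha.kronecker hP).submatrix
    fun x : Fin d × (Fin d × Fin n) => ((x.1, x.2.2), (x.1, x.2.1)))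

/-- The Choi matrix of `T`, with entries `C ((s,i),(t,j)) = T(E_{st})_{ij}`. -/
def choi (d : ℕ) (T : Matrix (Fin d) (Fin d) ℂ →ₗ[ℂ] Matrix (Fin d) (Fin d) ℂ) :
    Matrix (Fin d × Fin d) (Fin d × Fin d) ℂ :=
  of fun p q => T (single p.1 q.1 1) p.2 q.2

lemma map_apply_eq_sum_choi {d : ℕ} (T : Matrix (Fin d) (Fin d) ℂ →ₗ[ℂ] Matrix (Fin d) (Fin d) ℂ)
    (X : Matrix (Fin d) (Fin d) ℂ) (i j : Fin d) :
    T X i j = ∑ s, ∑ t, X s t * choi d T (s, i) (t, j) := by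
  conv_lhs => rw [matrix_eq_sum_single X]
  simp only [map_sum, Matrix.sum_apply, choi, of_apply]
  refine Finset.sum_congr rfl fun s _ => Finset.sum_congr rfl fun t _ => ?_
  rw [← smul_eq_mul, ← Matrix.smul_apply, ← map_smul, smul_single, smul_eq_mul, mul_one]

open scoped MatrixOrder in
/-- A positive map preserves adjoints, since a Hermitian matrix is a difference of PSD ones. -/
lemma IsPosMap.map_conjTranspose {d : ℕ}
    {T : Matrix (Fin d) (Fin d) ℂ →ₗ[ℂ] Matrix (Fin d) (Fin d) ℂ} (hT : IsPosMap d T)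
    (X : Matrix (Fin d) (Fin d) ℂ) : T Xᴴ = (T X)ᴴ := by
  have hherm : ∀ Y : Matrix (Fin d) (Fin d) ℂ, IsSelfAdjoint Y → (T Y)ᴴ = T Y := fun Y hY => by
    have hp := (hT _ (nonneg_iff_posSemidef.1 (CFC.posPart_nonneg Y))).isHermitian
    have hn := (hT _ (nonneg_iff_posSemidef.1 (CFC.negPart_nonneg Y))).isHermitian
    rw [← CFC.posPart_sub_negPart Y hY, map_sub, conjTranspose_sub, hp.eq, hn.eq]
  have h1 := hherm _ (realPart X).2
  have h2 := hherm _ (imaginaryPart X).2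
  have hX := realPart_add_I_smul_imaginaryPart X
  have hX' : Xᴴ = (realPart X : Matrix (Fin d) (Fin d) ℂ) -
      Complex.I • (imaginaryPart X : Matrix (Fin d) (Fin d) ℂ) := by
    rw [← star_eq_conjTranspose]
    conv_lhs => rw [← hX]
    simp [sub_eq_add_neg]
  rw [hX', ← hX]
  simp [h1, h2, sub_eq_add_neg]

lemma IsPosMap.isHermitian_choi {d : ℕ}
    {T : Matrix (Fin d) (Fin d) ℂ →ₗ[ℂ] Matrix (Fin d) (Fin d) ℂ} (hT : IsPosMap d T) :
    (choi d T).IsHermitian := by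
  ext p q
  rw [conjTranspose_apply, choi, of_apply, of_apply, ← conjTranspose_apply, ← hT.map_conjTranspose]
  simp

/-! ### Maps that send PPT matrices to PSD matrices -/

lemma tensorExt_kronecker {d n : ℕ}
    (T : Matrix (Fin d) (Fin d) ℂ →ₗ[ℂ] Matrix (Fin d) (Fin d) ℂ)
    (p : Matrix (Fin d) (Fin d) ℂ) (q : Matrix (Fin n) (Fin n) ℂ) :
    tensorExt d n T (p ⊗ₖ q) = T p ⊗ₖ q := by
  ext x y
  have : (of fun s t => (p ⊗ₖ q) (s, x.2) (t, y.2)) = q x.2 y.2 • p := by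
    ext s t
    simp [mul_comm]
  rw [tensorExt, of_apply, this, map_smul, Matrix.smul_apply, smul_eq_mul, mul_comm,
    kroneckerMap_apply]

lemma tensorExt_sum {d n N : ℕ}
    (T : Matrix (Fin d) (Fin d) ℂ →ₗ[ℂ] Matrix (Fin d) (Fin d) ℂ)
    (a : Fin N → Matrix (Fin d × Fin n) (Fin d × Fin n) ℂ) :
    tensorExt d n T (∑ k, a k) = ∑ k, tensorExt d n T (a k) := by
  ext x y
  have : (of fun s t => (∑ k, a k) (s, x.2) (t, y.2)) =
      ∑ k, of fun s t => a k (s, x.2) (t, y.2) := by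
    ext s t
    simp [Matrix.sum_apply]
  rw [tensorExt, of_apply, this, map_sum, Matrix.sum_apply, Matrix.sum_apply]
  rfl

lemma IsPosMap.tensorExt_posSemidef {d n : ℕ}
    {T : Matrix (Fin d) (Fin d) ℂ →ₗ[ℂ] Matrix (Fin d) (Fin d) ℂ} (hT : IsPosMap d T)
    {a : Matrix (Fin d × Fin n) (Fin d × Fin n) ℂ} (ha : SepState d n a) :
    (tensorExt d n T a).PosSemidef := by
  obtain ⟨N, p, q, hpq, rfl⟩ := ha
  rw [tensorExt_sum]
  refine posSemidef_sum _ fun k _ => ?_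
  rw [tensorExt_kronecker]
  exact (hT _ (hpq k).1).kronecker (hpq k).2

/-- Positivity of `T` is tested on the PPT matrices `p ⊗ 1`. -/
lemma isPosMap_of_ppt {d : ℕ} (hd : 0 < d)
    (T : Matrix (Fin d) (Fin d) ℂ →ₗ[ℂ] Matrix (Fin d) (Fin d) ℂ)
    (h : ∀ a, IsPPTState d d a → (tensorExt d d T a).PosSemidef) : IsPosMap d T := fun p hp => by
  have hp1 : (p ⊗ₖ (1 : Matrix (Fin d) (Fin d) ℂ)).PosSemidef := hp.kronecker .one
  have hΓ : ptrans d d (p ⊗ₖ (1 : Matrix (Fin d) (Fin d) ℂ)) = p ⊗ₖ 1 := by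
    ext x y
    simp [ptrans, Matrix.one_apply, eq_comm]
  have h1 := h _ ⟨hp1, hΓ.symm ▸ hp1⟩
  rw [tensorExt_kronecker] at h1
  have h2 := h1.submatrix fun i => (i, (⟨0, hd⟩ : Fin d))
  convert h2 using 1
  ext i j
  simp

/-- If `T ⊗ id_d` maps PPT matrices to PSD matrices then `T` is decomposable. Pairing the Choi
matrix of `T` with `a` is evaluating the quadratic form of `(T ⊗ id_d)(a)` at the maximally
entangled vector `∑ i, e_i ⊗ e_i`. -/
lemma isDecomposable_of_ppt {d : ℕ} (hd : 0 < d)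
    (T : Matrix (Fin d) (Fin d) ℂ →ₗ[ℂ] Matrix (Fin d) (Fin d) ℂ)
    (h : ∀ a, IsPPTState d d a → (tensorExt d d T a).PosSemidef) : IsDecomposable d T := by
  have hC : choi d T ∈ decompSet d := by
    refine mem_decompSet_of_pairing_nonneg (isPosMap_of_ppt hd T h).isHermitian_choi fun a ha => ?_
    -- The principal submatrix on the indices `(i, i)` has entries `T(a_{ij})_{ij}`; regarded as
    -- a matrix of `1 × 1` blocks, it has the required pairing as the sum of its blocks.
    have h1 := posSemidef_sum_blocks ((h a ha).submatrix
      fun x : Fin d × Unit => (x.1, x.1))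
    have h2 := (Complex.nonneg_iff.1 (h1.diag_nonneg (i := ()))).1
    refine h2.trans_eq (congrArg Complex.re ?_)
    simp only [of_apply, submatrix_apply, tensorExt, map_apply_eq_sum_choi T, Fintype.sum_prod_type]
    conv_rhs => rw [Finset.sum_comm]
    refine Finset.sum_congr rfl fun i _ => ?_
    rw [Finset.sum_comm]
    exact Finset.sum_congr rfl fun s _ => Finset.sum_comm
  obtain ⟨P, Q, hP, hQ, hPQ⟩ := hC
  refine ⟨ofChoi d P, ofChoi d Q, isCP_ofChoi hP, isCP_ofChoi hQ, fun X => ?_⟩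
  ext i j
  rw [map_apply_eq_sum_choi T, hPQ]
  simp [ofChoi, ptrans, mul_add, Finset.sum_add_distrib]

/-- If `T₂ ⊗ id_d` maps every PPT matrix to a separable matrix, then for every
positive map `T₁` the composition `T₁ ∘ T₂` is decomposable. -/
theorem pos_comp_decomposable_of_sep_image (d : ℕ) (hd : 0 < d)
    (T₂ : Matrix (Fin d) (Fin d) ℂ →ₗ[ℂ] Matrix (Fin d) (Fin d) ℂ)
    (hT₂ : ∀ a : Matrix (Fin d × Fin d) (Fin d × Fin d) ℂ,
      IsPPTState d d a → SepState d d (tensorExt d d (⇑T₂) a)) :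
    ∀ T₁ : Matrix (Fin d) (Fin d) ℂ →ₗ[ℂ] Matrix (Fin d) (Fin d) ℂ,
      IsPosMap d ⇑T₁ → IsDecomposable d (⇑T₁ ∘ ⇑T₂) := by
  intro T₁ hT₁
  exact isDecomposable_of_ppt hd (T₁ ∘ₗ T₂) fun a ha => hT₁.tensorExt_posSemidef (hT₂ a ha)
end

section
/- There exists a family A : Fin 4 → Fin 4 → M_4 of 4×4 complex matrices such that both block matrices blk(A) and blk(fun i j => A j i) are PSD, yet A 0 0 and A 0 1 do not commute: A 0 0 · A 0 1 ≠ A 0 1 · A 0 0. -/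
/-!
A sum `dd* ⊗ gg* + ff* ⊗ hh*` of tensor products of PSD matrices is PSD, and transposing the first
tensor factor keeps this form, with `d` and `f` replaced by their conjugates
(`blk_sepFamily_posSemidef`, `sepFamily_swap`). Its blocks are combinations of `gg*` and `hh*`,
which do not commute when `g` and `h` are neither parallel nor orthogonal. With `d = e₀` and
`f = e₀ + e₁`, block `(0, 0)` is `gg* + hh*` and block `(0, 1)` is `hh*`; these do not commute for
`g = e₀`, `h = e₀ + e₁`.
-/

open Matrix ComplexOrder

/-- Block matrix of a family `A : Fin n → Fin n → M_d`:
`blk(A)((i,s),(j,t)) = (A i j)(s,t)`. -/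
def blk (n d : ℕ) (A : Fin n → Fin n → Matrix (Fin d) (Fin d) ℂ) :
    Matrix (Fin n × Fin d) (Fin n × Fin d) ℂ :=
  Matrix.of fun p q => A p.1 q.1 p.2 q.2

/-- The sum `dd* ⊗ gg* + ff* ⊗ hh*` as a family of blocks: block `(i, j)` is
`d i * conj (d j) • gg* + f i * conj (f j) • hh*`. -/
def sepFamily (d f g h : Fin 4 → ℂ) (i j : Fin 4) : Matrix (Fin 4) (Fin 4) ℂ :=
  (d i * star (d j)) • vecMulVec g (star g) + (f i * star (f j)) • vecMulVec h (star h)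

lemma blk_sepFamily_posSemidef (d f g h : Fin 4 → ℂ) :
    (blk 4 4 (sepFamily d f g h)).PosSemidef := by
  -- `dd* ⊗ gg*` is the rank-one matrix of the vector `d ⊗ g`, and likewise for `f ⊗ h`.
  have key : blk 4 4 (sepFamily d f g h) =
      vecMulVec (fun p : Fin 4 × Fin 4 => d p.1 * g p.2) (star fun p => d p.1 * g p.2) +
      vecMulVec (fun p : Fin 4 × Fin 4 => f p.1 * h p.2) (star fun p => f p.1 * h p.2) := by
    ext p q
    simp [blk, sepFamily, vecMulVec_apply]
    ring
  rw [key]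
  exact (posSemidef_vecMulVec_self_star _).add (posSemidef_vecMulVec_self_star _)

/-- Exchanging the block indices replaces `d` and `f` by their entrywise conjugates, so the
transposed family has the same form. -/
lemma sepFamily_swap (d f g h : Fin 4 → ℂ) :
    (fun i j => sepFamily d f g h j i) = sepFamily (star d) (star f) g h := by
  funext i j
  simp [sepFamily, mul_comm]

/-- There is a family `A : Fin 4 → Fin 4 → M_4` with both `blk A` and the block matrix of the
transposed family PSD, whose entries do not commute. -/
theorem exists_noncommuting_blocks :
    ∃ A : Fin 4 → Fin 4 → Matrix (Fin 4) (Fin 4) ℂ,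
      (blk 4 4 A).PosSemidef ∧ (blk 4 4 (fun i j => A j i)).PosSemidef ∧
      A 0 0 * A 0 1 ≠ A 0 1 * A 0 0 := by
  refine ⟨sepFamily ![1, 0, 0, 0] ![1, 1, 0, 0] ![1, 0, 0, 0] ![1, 1, 0, 0],
    blk_sepFamily_posSemidef _ _ _ _, ?_, fun hc => ?_⟩
  · rw [sepFamily_swap]
    exact blk_sepFamily_posSemidef _ _ _ _
  -- The two products differ in entry `(0, 1)`, where they are `3` and `2`.
  · have h01 := congrFun (congrFun hc 0) 1
    simp only [sepFamily, Matrix.mul_apply, Fin.sum_univ_four, Matrix.add_apply, Matrix.smul_apply,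
      vecMulVec_apply, Pi.star_apply] at h01
    simp at h01
end

section
/- Every PPT matrix on the 2⊗2 system is separable: if a is a complex matrix indexed by (Fin 2 × Fin 2) such that both a and its partial transpose Γ(a) are PSD, then a is a finite sum of Kronecker products p ⊗ q with p, q ∈ M_2 PSD. -/
open Matrix Kronecker ComplexOrder

/-!
Write `a` in `2 × 2` blocks as `[[A, B], [Bᴴ, C]]`. Positivity of `Γ(a)` is, after a full
transposition, positivity of `[[A, Bᴴ], [B, C]]`. If `A` is invertible, a congruence on the second
factor makes `A = 1`, and the two conditions become `BᴴB ≤ C` and `BBᴴ ≤ C`.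

The engine is `Sep3.of_normal`: if `N` is normal with spectral projections `q z`, then
`[[1, N], [Nᴴ, NᴴN]] = ∑ [[1, z], [z̄, |z|²]] ⊗ q z` is separable, and so are its compressions. It
therefore suffices to dilate `B` to a normal `N` with the corner of `NᴴN` at most `C`; what is left
over sits in the lower right block and is a product. Diagonalising the traceless matrix
`BᴴB - BBᴴ = diag(δ, -δ)` forces, for `δ > 0`, equal diagonal entries of `B`, and then `B` has an
explicit normal dilation of size `3` for every `(α, β)` with `|α|² - |β|² = δ`
(`Sep3.dilation`), the corner of `NᴴN` being `BᴴB + w wᴴ` with `w = (β̄, ᾱ)`. A suitable `w` with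
`w wᴴ ≤ C - BᴴB` exists because both `C - BᴴB` and `C - BBᴴ = C - BᴴB + diag(δ, -δ)` are positive
(`exists_rank_one_le'`): shrink one of them until its two diagonal entries differ by exactly `δ`,
then subtract a multiple of the identity to reach rank one.

If `A` is singular, the two positivity conditions force `B` to be supported where `A` is, and `a`
is visibly a sum of two products.
-/

/-! ### Separability in terms of blocks -/

/-- Complex `2 × 2` matrices. -/
abbrev M2 := Matrix (Fin 2) (Fin 2) ℂ

/-- Separability of the block matrix `[[A, B], [Bᴴ, C]]`, expressed through its three independent
blocks; the summands are indexed by an arbitrary finite type. -/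
def Sep3 (A B C : M2) : Prop :=
  ∃ (ι : Type) (_ : Fintype ι) (p q : ι → M2),
    (∀ k, (p k).PosSemidef ∧ (q k).PosSemidef) ∧
    A = ∑ k, p k 0 0 • q k ∧ B = ∑ k, p k 0 1 • q k ∧ C = ∑ k, p k 1 1 • q k

lemma Sep3.add {A B C A' B' C' : M2} (h : Sep3 A B C) (h' : Sep3 A' B' C') :
    Sep3 (A + A') (B + B') (C + C') := by
  obtain ⟨ι, _, p, q, hpq, rfl, rfl, rfl⟩ := h
  obtain ⟨κ, _, p', q', hpq', rfl, rfl, rfl⟩ := h'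
  refine ⟨ι ⊕ κ, inferInstance, Sum.elim p p', Sum.elim q q', ?_, ?_, ?_, ?_⟩
  · rintro (k | k)
    · exact hpq k
    · exact hpq' k
  all_goals simp

lemma Sep3.conj {A B C : M2} (h : Sep3 A B C) (S : M2) :
    Sep3 (Sᴴ * A * S) (Sᴴ * B * S) (Sᴴ * C * S) := by
  obtain ⟨ι, _, p, q, hpq, rfl, rfl, rfl⟩ := h
  refine ⟨ι, inferInstance, p, fun k => Sᴴ * q k * S,
    fun k => ⟨(hpq k).1, (hpq k).2.conjTranspose_mul_mul_same S⟩, ?_, ?_, ?_⟩ <;>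
  simp [Finset.mul_sum, Finset.sum_mul]

/-- The blocks of the product `p ⊗ q`. -/
lemma Sep3.of_product {p q : M2} (hp : p.PosSemidef) (hq : q.PosSemidef) :
    Sep3 (p 0 0 • q) (p 0 1 • q) (p 1 1 • q) :=
  ⟨Unit, inferInstance, fun _ => p, fun _ => q, fun _ => ⟨hp, hq⟩, by simp, by simp, by simp⟩

lemma Sep3.corner {C : M2} (hC : C.PosSemidef) : Sep3 0 0 C := by
  have hp : (diagonal ![0, 1] : M2).PosSemidef := by
    refine PosSemidef.diagonal fun i => ?_
    fin_cases i <;> simp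
  simpa using Sep3.of_product hp hC

lemma Sep3.sepState {a : Matrix (Fin 2 × Fin 2) (Fin 2 × Fin 2) ℂ} (ha : a.IsHermitian)
    (h : Sep3 (of fun k l => a (0, k) (0, l)) (of fun k l => a (0, k) (1, l))
      (of fun k l => a (1, k) (1, l))) : SepState 2 2 a := by
  obtain ⟨ι, _, p, q, hpq, hA, hB, hC⟩ := h
  have e := (Fintype.equivFin ι).symm
  refine ⟨Fintype.card ι, p ∘ e, q ∘ e, fun k => hpq (e k), ?_⟩
  have hs : ∑ k, (p ∘ e) k ⊗ₖ (q ∘ e) k = ∑ k, p k ⊗ₖ q k :=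
    e.sum_comp fun k => p k ⊗ₖ q k
  rw [hs]
  have hB' : ∀ k l, a (0, k) (1, l) = ∑ x, p x 0 1 * q x k l := fun k l => by
    simpa [Matrix.sum_apply] using congr_fun (congr_fun hB k) l
  ext ⟨i, k⟩ ⟨j, l⟩
  rw [Matrix.sum_apply]
  fin_cases i <;> fin_cases j <;> simp only [kroneckerMap_apply, Fin.zero_eta, Fin.mk_one]
  · simpa [Matrix.sum_apply] using congr_fun (congr_fun hA k) l
  · exact hB' k l
  · rw [← ha.apply, hB' l k, star_sum]
    refine Finset.sum_congr rfl fun x _ => ?_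
    rw [star_mul', (hpq x).1.1.apply, (hpq x).2.1.apply]
  · simpa [Matrix.sum_apply] using congr_fun (congr_fun hC k) l

/-! ### Compressions of normal matrices -/

section
open scoped Matrix.Norms.L2Operator MatrixOrder

/-- A compression of `[[1, N], [Nᴴ, NᴴN]]` with `N` normal is separable, by the spectral theorem
for `N`. -/
lemma Sep3.of_normal {n : Type} [Fintype n] [DecidableEq n] (N : Matrix n n ℂ)
    (hN : Nᴴ * N = N * Nᴴ) (V : Matrix n (Fin 2) ℂ) :
    Sep3 (Vᴴ * V) (Vᴴ * N * V) (Vᴴ * (Nᴴ * N) * V) := by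
  have hn : IsStarNormal N := ⟨hN⟩
  have hfin : (spectrum ℂ N).Finite := N.finite_spectrum
  classical
  have hc : ∀ f : ℂ → ℂ, ContinuousOn f (spectrum ℂ N) := fun f => hfin.continuousOn f
  -- `q z` is the spectral projection of `N` at `z`; every function is continuous on
  -- the finite spectrum
  let q : ℂ → Matrix n n ℂ := fun z => cfc (fun w => if w = z then 1 else 0 : ℂ → ℂ) N
  have hq : ∀ z, (q z).PosSemidef := fun z => by
    rw [← Matrix.nonneg_iff_posSemidef]
    refine cfc_nonneg fun w _ => ?_
    split_ifs <;> simp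
  have key : ∀ f : ℂ → ℂ, cfc f N = ∑ z ∈ hfin.toFinset, f z • q z := fun f => by
    have : Set.EqOn f (fun w => (∑ z ∈ hfin.toFinset, fun w => f z • (if w = z then 1 else 0)) w)
        (spectrum ℂ N) := fun w hw => by
      simp [hw]
    rw [cfc_congr this, cfc_sum (fun z w => f z • (if w = z then 1 else 0)) N _ fun _ _ => hc _]
    refine Finset.sum_congr rfl fun z _ => ?_
    rw [cfc_smul _ _ _ (hc _)]
  have comp : ∀ f : ℂ → ℂ, Vᴴ * cfc f N * V =
      ∑ z ∈ hfin.toFinset, f z • (Vᴴ * q z * V) := fun f => by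
    simp [key f, Matrix.mul_sum, Matrix.sum_mul]
  have h1 := comp fun _ => 1
  rw [cfc_const_one ℂ N hn, Matrix.mul_one] at h1
  have h2 := comp fun z => z
  rw [cfc_id' ℂ N] at h2
  have h3 := comp fun z => star z * z
  rw [cfc_mul _ _ N (hc _) (hc _), cfc_star_id N hn, cfc_id' ℂ N, star_eq_conjTranspose] at h3
  refine ⟨hfin.toFinset, inferInstance, fun z => vecMulVec ![1, star z.1] (star ![1, star z.1]),
    fun z => Vᴴ * q z * V, fun z => ⟨posSemidef_vecMulVec_self_star _,
      (hq z).conjTranspose_mul_mul_same V⟩, ?_, ?_, ?_⟩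
  · rw [h1, ← Finset.sum_coe_sort]
    simp [vecMulVec]
  · rw [h2, ← Finset.sum_coe_sort]
    simp [vecMulVec]
  · rw [h3, ← Finset.sum_coe_sort]
    simp [vecMulVec]
end

/-! ### Positive semidefinite `2 × 2` matrices -/

lemma posSemidef_fin_two {H : M2} (h0 : 0 ≤ H 0 0) (h1 : 0 ≤ H 1 1) (h : H 1 0 = star (H 0 1))
    (hd : 0 ≤ H.det) : H.PosSemidef := by
  have hh : H.IsHermitian := by
    ext i j
    fin_cases i <;> fin_cases j <;> simp [h, Complex.conj_eq_iff_im, ← (Complex.nonneg_iff.1 h0).2,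
      ← (Complex.nonneg_iff.1 h1).2]
  rw [hh.posSemidef_iff_eigenvalues_nonneg]
  have ht := hh.trace_eq_sum_eigenvalues
  rw [hh.det_eq_prod_eigenvalues] at hd
  have ht0 : 0 ≤ H.trace := by rw [trace_fin_two]; exact add_nonneg h0 h1
  rw [ht] at ht0
  simp only [Fin.sum_univ_two, Fin.prod_univ_two, Complex.coe_algebraMap] at hd ht0
  norm_cast at hd ht0
  have a0 : 0 ≤ hh.eigenvalues 0 := by nlinarith
  have a1 : 0 ≤ hh.eigenvalues 1 := by nlinarith
  intro i
  fin_cases i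
  · exact a0
  · exact a1

/-- Unitary diagonalisation of a Hermitian `2 × 2` matrix with the eigenvalues in decreasing
order. -/
lemma exists_diag {G : M2} (hG : G.IsHermitian) : ∃ (U : M2) (x y : ℝ), y ≤ x ∧ Uᴴ * U = 1 ∧
    U * Uᴴ = 1 ∧ Uᴴ * G * U = diagonal ![(x : ℂ), (y : ℂ)] := by
  set W : M2 := hG.eigenvectorUnitary.1
  have h1 : Wᴴ * W = 1 := Unitary.coe_star_mul_self hG.eigenvectorUnitary
  have h2 : W * Wᴴ = 1 := Unitary.coe_mul_star_self hG.eigenvectorUnitary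
  have h3 : Wᴴ * G * W = diagonal ![(hG.eigenvalues 0 : ℂ), (hG.eigenvalues 1 : ℂ)] := by
    have := hG.conjStarAlgAut_star_eigenvectorUnitary
    rw [Unitary.conjStarAlgAut_star_apply] at this
    refine this.trans ?_
    congr 1
    ext i
    fin_cases i <;> rfl
  rcases le_total (hG.eigenvalues 1) (hG.eigenvalues 0) with h | h
  · exact ⟨W, _, _, h, h1, h2, h3⟩
  · let S : M2 := !![0, 1; 1, 0]
    have hS : S * S = 1 := by simp [S, Matrix.one_fin_two]
    have hS' : Sᴴ = S := by
      ext i j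
      fin_cases i <;> fin_cases j <;> simp [S]
    refine ⟨W * S, _, _, h, ?_, ?_, ?_⟩
    · rw [conjTranspose_mul, Matrix.mul_assoc, ← Matrix.mul_assoc Wᴴ, h1, Matrix.one_mul, hS', hS]
    · rw [conjTranspose_mul, Matrix.mul_assoc, ← Matrix.mul_assoc S, hS', hS, Matrix.one_mul, h2]
    · have : (W * S)ᴴ * G * (W * S) = S * (Wᴴ * G * W) * S := by
        rw [conjTranspose_mul, hS']; simp only [Matrix.mul_assoc]
      rw [this, h3]
      ext i j
      fin_cases i <;> fin_cases j <;> simp [S, Matrix.mul_apply, Fin.sum_univ_two, vecMul_diagonal]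

lemma exists_real_fin_two {H : M2} (hH : H.PosSemidef) : ∃ (x y : ℝ) (c : ℂ), 0 ≤ x ∧ 0 ≤ y ∧
    Complex.normSq c ≤ x * y ∧ H = !![(x : ℂ), c; star c, (y : ℂ)] := by
  obtain ⟨h0, h0'⟩ := Complex.nonneg_iff.1 (hH.diag_nonneg (i := 0))
  obtain ⟨h1, h1'⟩ := Complex.nonneg_iff.1 (hH.diag_nonneg (i := 1))
  have e : H = !![((H 0 0).re : ℂ), H 0 1; star (H 0 1), ((H 1 1).re : ℂ)] := by
    ext i j
    fin_cases i <;> fin_cases j <;> simp [Complex.ext_iff, ← h0', ← h1']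
    · have := hH.1.apply 1 0
      rw [← this]; simp
  refine ⟨(H 0 0).re, (H 1 1).re, H 0 1, h0, h1, ?_, e⟩
  have hd := hH.det_nonneg
  rw [e, det_fin_two_of, Complex.star_def, Complex.mul_conj] at hd
  norm_cast at hd
  linarith

/-- A positive matrix `[[x, c], [c̄, y]]` with `y - x ≥ δ > 0` dominates a positive rank-one matrix
whose diagonal entries differ by exactly `δ`. -/
lemma exists_rank_one_le {x y δ : ℝ} {c : ℂ} (hx : 0 ≤ x) (hy : 0 ≤ y)
    (hc : Complex.normSq c ≤ x * y) (hδ : 0 < δ) (h : δ ≤ y - x) :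
    ∃ (m : ℝ) (γ : ℂ), 0 ≤ m ∧ Complex.normSq γ = m * (m + δ) ∧
      (!![(x : ℂ), c; star c, (y : ℂ)] - !![(m : ℂ), γ; star γ, ((m + δ : ℝ) : ℂ)]).PosSemidef := by
  have hh : 0 < y - x := by linarith
  -- scaling by `t` makes the diagonal gap equal to `δ`; then `m` is the root of
  -- `m (m + δ) = t² |c|²`, and the scaled matrix exceeds the rank-one one by `(t x - m) • 1`
  obtain ⟨t, ht⟩ : ∃ t, t = δ / (y - x) := ⟨_, rfl⟩
  have ht0 : 0 < t := by rw [ht]; positivity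
  have ht1 : t ≤ 1 := by rw [ht, div_le_one hh]; exact h
  have htd : t * (y - x) = δ := by rw [ht]; field_simp
  have hn := Complex.normSq_nonneg c
  obtain ⟨r, hr⟩ : ∃ r, r = √(δ ^ 2 + 4 * (t ^ 2 * Complex.normSq c)) := ⟨_, rfl⟩
  have hr2 : r ^ 2 = δ ^ 2 + 4 * (t ^ 2 * Complex.normSq c) := by
    rw [hr, Real.sq_sqrt (by positivity)]
  have hr0 : 0 ≤ r := by rw [hr]; positivity
  have hrd : δ ≤ r := by
    refine (sq_le_sq₀ hδ.le hr0).1 ?_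
    nlinarith [mul_nonneg (sq_nonneg t) hn]
  have hm : (r - δ) / 2 ≤ t * x := by
    have : r ^ 2 ≤ (2 * (t * x) + δ) ^ 2 := by
      rw [hr2, ← htd]
      nlinarith [mul_le_mul_of_nonneg_left hc (sq_nonneg t)]
    have := abs_le_of_sq_le_sq this (by positivity)
    linarith [le_abs_self r]
  refine ⟨(r - δ) / 2, t * c, by linarith, ?_, ?_⟩
  · rw [map_mul, Complex.normSq_ofReal]; nlinarith
  · have e : !![(x : ℂ), c; star c, (y : ℂ)] -
        !![(((r - δ) / 2 : ℝ) : ℂ), t * c; star (t * c), (((r - δ) / 2 + δ : ℝ) : ℂ)] =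
        (1 - t : ℝ) • !![(x : ℂ), c; star c, (y : ℂ)] + (t * x - (r - δ) / 2 : ℝ) • 1 := by
      have hy' : (y : ℂ) * t = t * x + δ := by rw [← htd]; push_cast; ring
      ext i j
      fin_cases i <;> fin_cases j <;> simp
      · ring
      · ring
      · ring
      · linear_combination hy'
    rw [e]
    refine ((posSemidef_fin_two ?_ ?_ ?_ ?_).smul (by linarith)).add
      (PosSemidef.one.smul (by linarith))
    · simpa using hx
    · simpa using hy
    · simp
    · rw [det_fin_two_of, Complex.star_def, Complex.mul_conj]
      norm_cast
      linarith

/-- If `Q` and `Q + diag(δ, -δ)` are positive, then `Q` dominates a positive rank-one matrix whose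
diagonal entries differ by exactly `δ`. -/
lemma exists_rank_one_le' {Q : M2} {δ : ℝ} (hδ : 0 < δ) (hQ : Q.PosSemidef)
    (hP : (Q + diagonal ![(δ : ℂ), -(δ : ℂ)]).PosSemidef) :
    ∃ (m : ℝ) (γ : ℂ), 0 ≤ m ∧ Complex.normSq γ = m * (m + δ) ∧
      (Q - !![(m : ℂ), γ; star γ, ((m + δ : ℝ) : ℂ)]).PosSemidef := by
  obtain ⟨x, y, c, hx, hy, hc, rfl⟩ := exists_real_fin_two hQ
  rcases le_total δ (y - x) with h | h
  · exact exists_rank_one_le hx hy hc hδ h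
  -- here the diagonal gap of `Q + diag(δ, -δ)`, with the basis vectors exchanged, is at least `δ`
  · obtain ⟨x', y', c', hx', hy', hc', e⟩ := exists_real_fin_two hP
    have e00 := congr_fun (congr_fun e 0) 0
    have e01 := congr_fun (congr_fun e 0) 1
    have e11 := congr_fun (congr_fun e 1) 1
    simp at e00 e01 e11
    norm_cast at e00 e11
    subst e01
    obtain ⟨m, γ, hm, hγ, hp⟩ := exists_rank_one_le (c := star c) hy' hx'
      (by simpa [mul_comm] using hc') hδ (by linarith)
    refine ⟨m, star γ, hm, by simpa using hγ, ?_⟩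
    convert hp.submatrix ![1, 0] using 1
    ext i j
    fin_cases i <;> fin_cases j <;> simp
    · rw [← e00]; push_cast; ring
    · rw [← e11]; push_cast; ring

/-! ### The case of an identity block -/

/-- `B = [[τ, s], [t, τ]]` with `|t|² - |s|² = |α|² - |β|² = δ > 0` has the normal dilation
`[[τ, s, α], [t, τ, β], [β, α, τ + z]]` for a suitable `z`, so the block matrix with entries
`1`, `B` and `BᴴB + w wᴴ`, where `w = (β̄, ᾱ)`, is separable. -/
lemma Sep3.dilation (τ s t α β : ℂ) {δ : ℝ} (hδ : 0 < δ)
    (h₁ : star α * α - star β * β = δ) (h₂ : star t * t - star s * s = δ) :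
    Sep3 1 !![τ, s; t, τ] (!![τ, s; t, τ]ᴴ * !![τ, s; t, τ] +
      !![star β * β, star β * α; star α * β, star α * α]) := by
  have hδ' : (δ : ℂ) ≠ 0 := by exact_mod_cast ne_of_gt hδ
  -- `z` solves the real-linear equation `e₁` below, which is what normality of `N` amounts to
  obtain ⟨z, hz⟩ : ∃ z : ℂ, z * δ = α * (t * star β - star s * α) + β * (star t * β - s * star α) :=
    ⟨_, div_mul_cancel₀ _ hδ'⟩
  have hz' : star z * δ =
      star α * (star t * β - s * star α) + star β * (t * star β - star s * α) := by
    simpa using congrArg star hz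
  have e₁ : star t * β - s * star α = α * star z - star β * z := by
    apply mul_right_cancel₀ hδ'
    linear_combination (-α) * hz' + star β * hz - (star t * β - s * star α) * h₁
  have e₂ : t * star β - star s * α = star α * z - β * star z := by
    simpa using congrArg star e₁
  let N : Matrix (Fin 3) (Fin 3) ℂ := !![τ, s, α; t, τ, β; β, α, τ + z]
  let V : Matrix (Fin 3) (Fin 2) ℂ := !![1, 0; 0, 1; 0, 0]
  have hN : Nᴴ * N = N * Nᴴ := by
    simp only [Complex.star_def] at *
    ext i j
    fin_cases i <;> fin_cases j <;> simp [N, Matrix.mul_apply, Fin.sum_univ_three]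
    · linear_combination h₂ - h₁
    · ring
    · linear_combination e₁
    · ring
    · linear_combination h₁ - h₂
    · linear_combination -e₂
    · linear_combination e₂
    · linear_combination -e₁
    · ring
  have := Sep3.of_normal N hN V
  convert this using 1
  · ext i j
    fin_cases i <;> fin_cases j <;> simp [V, Matrix.mul_apply, Fin.sum_univ_three]
  · ext i j
    fin_cases i <;> fin_cases j <;> simp [V, N, Matrix.mul_apply, Fin.sum_univ_three]
  · ext i j
    fin_cases i <;> fin_cases j <;>
      simp [V, N, Matrix.mul_apply, Fin.sum_univ_three, Fin.sum_univ_two]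

/-- The case `A = 1` with `BᴴB - BBᴴ` diagonal. -/
lemma Sep3.of_diag {B C : M2} {δ : ℝ} (hδ : 0 ≤ δ)
    (hG : Bᴴ * B - B * Bᴴ = diagonal ![(δ : ℂ), -(δ : ℂ)])
    (hQ : (C - Bᴴ * B).PosSemidef) (hP : (C - B * Bᴴ).PosSemidef) : Sep3 1 B C := by
  rcases hδ.eq_or_lt with rfl | hδ
  · have hB : Bᴴ * B = B * Bᴴ := by
      rw [← sub_eq_zero, hG]
      ext i j
      fin_cases i <;> fin_cases j <;> simp
    simpa using (Sep3.of_normal B hB 1).add (Sep3.corner hQ)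
  have g00 : star (B 1 0) * B 1 0 - star (B 0 1) * B 0 1 = δ := by
    have := congr_fun (congr_fun hG 0) 0
    simp [Matrix.mul_apply, Fin.sum_univ_two] at this
    simp only [Complex.star_def]
    linear_combination this
  have g01 : B 0 1 * star (B 0 0 - B 1 1) = star (B 1 0) * (B 0 0 - B 1 1) := by
    have := congr_fun (congr_fun hG 0) 1
    simp [Matrix.mul_apply, Fin.sum_univ_two] at this
    simp only [Complex.star_def, map_sub]
    linear_combination this
  -- `|B 1 0| ≠ |B 0 1|` by `g00`, so comparing absolute values in `g01` gives the claim
  have hd : B 0 0 = B 1 1 := by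
    by_contra hne
    have hne' : Complex.normSq (B 0 0 - B 1 1) ≠ 0 := by
      rwa [Ne, Complex.normSq_eq_zero, sub_eq_zero]
    have := congrArg Complex.normSq g01
    simp only [map_mul, Complex.star_def, Complex.normSq_conj] at this
    have h2 := mul_right_cancel₀ hne' this
    rw [Complex.star_def, ← Complex.normSq_eq_conj_mul_self,
      ← Complex.normSq_eq_conj_mul_self, h2, sub_self] at g00
    exact hδ.ne (by exact_mod_cast g00)
  obtain ⟨m, γ, hm, hγ, hr⟩ := exists_rank_one_le' hδ hQ (by rw [← hG]; simpa using hP)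
  have hmδ : 0 < m + δ := by linarith
  have hsq : (√(m + δ) : ℂ) * (√(m + δ) : ℂ) = m + δ := by
    exact_mod_cast Real.mul_self_sqrt hmδ.le
  have hs0 : (√(m + δ) : ℂ) ≠ 0 := by
    exact_mod_cast (Real.sqrt_pos.2 hmδ).ne'
  have hγ' : γ * star γ = m * (m + δ) := by
    rw [Complex.star_def, Complex.mul_conj, hγ]; push_cast; ring
  -- choose `α`, `β` with `|α|² = m + δ`, `|β|² = m` and `β̄ α = γ`
  obtain ⟨α, hα⟩ : ∃ α : ℂ, α = √(m + δ) := ⟨_, rfl⟩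
  have hα' : star α = α := by simp [hα]
  rw [← hα] at hsq hs0
  obtain ⟨β, hβ⟩ : ∃ β : ℂ, β * α = star γ := ⟨_, div_mul_cancel₀ _ hs0⟩
  have hβ' : star β * α = γ := by simpa [hα'] using congrArg star hβ
  have hβm : star β * β = m := by
    have : (m + δ : ℂ) ≠ 0 := by exact_mod_cast hmδ.ne'
    apply mul_right_cancel₀ this
    rw [← hγ', ← hsq, ← hβ, ← hβ']; ring
  have hαm : star α * α = m + δ := by rw [hα', hsq]
  have hB : B = !![B 0 0, B 0 1; B 1 0, B 0 0] := by
    ext i j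
    fin_cases i <;> fin_cases j <;> simp [hd]
  have hdil := Sep3.dilation (B 0 0) (B 0 1) (B 1 0) α β hδ (by rw [hαm, hβm]; ring) g00
  have hrest := Sep3.corner hr
  rw [hαm, hβm, hβ', hα', mul_comm α β, hβ, ← hB] at hdil
  simpa using hdil.add hrest

/-- The case `A = 1`, where the two positivity conditions are in Schur complement form. -/
lemma Sep3.of_one {B C : M2} (hQ : (C - Bᴴ * B).PosSemidef) (hP : (C - B * Bᴴ).PosSemidef) :
    Sep3 1 B C := by
  have hG : (Bᴴ * B - B * Bᴴ).IsHermitian := by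
    simp [IsHermitian, conjTranspose_sub, conjTranspose_mul]
  obtain ⟨U, x, y, hxy, hU, hU', hd⟩ := exists_diag hG
  have e₁ : (Uᴴ * B * U)ᴴ * (Uᴴ * B * U) = Uᴴ * (Bᴴ * B) * U := by
    simp only [conjTranspose_mul, conjTranspose_conjTranspose, Matrix.mul_assoc]
    rw [← Matrix.mul_assoc U, hU', Matrix.one_mul]
  have e₂ : (Uᴴ * B * U) * (Uᴴ * B * U)ᴴ = Uᴴ * (B * Bᴴ) * U := by
    simp only [conjTranspose_mul, conjTranspose_conjTranspose, Matrix.mul_assoc]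
    rw [← Matrix.mul_assoc U, hU', Matrix.one_mul]
  have htr : y = -x := by
    have h := congrArg trace hd
    rw [trace_mul_cycle, hU', Matrix.one_mul, trace_sub, trace_mul_comm, sub_self] at h
    simp at h
    have : (x + y : ℝ) = 0 := by exact_mod_cast h.symm
    linarith
  subst htr
  have := Sep3.of_diag (B := Uᴴ * B * U) (C := Uᴴ * C * U) (δ := x) (by linarith)
    (by rw [e₁, e₂, ← Matrix.sub_mul, ← Matrix.mul_sub, hd]; simp)
    (by rw [e₁, ← Matrix.sub_mul, ← Matrix.mul_sub]; exact hQ.conjTranspose_mul_mul_same U)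
    (by rw [e₂, ← Matrix.sub_mul, ← Matrix.mul_sub]; exact hP.conjTranspose_mul_mul_same U)
  have hc := this.conj Uᴴ
  have k : ∀ X : M2, Uᴴᴴ * (Uᴴ * X * U) * Uᴴ = X := fun X => by
    simp only [conjTranspose_conjTranspose, Matrix.mul_assoc, hU', Matrix.mul_one]
    rw [← Matrix.mul_assoc, hU', Matrix.one_mul]
  rwa [k, k, Matrix.mul_one, conjTranspose_conjTranspose, hU'] at hc

/-! ### Reduction to an identity block -/

/-- Compression of a positive block matrix by the column `[X; 1]`. -/
lemma Matrix.PosSemidef.blockTest {A B C : M2} (h : (fromBlocks A B Bᴴ C).PosSemidef) (X : M2) :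
    (Xᴴ * A * X + Xᴴ * B + Bᴴ * X + C).PosSemidef := by
  have := h.conjTranspose_mul_mul_same (fromRows X (1 : M2))
  rw [conjTranspose_fromRows_eq_fromCols_conjTranspose, Matrix.mul_assoc, fromBlocks_mul_fromRows,
    fromCols_mul_fromRows] at this
  convert this using 1
  simp [Matrix.mul_add, Matrix.mul_assoc, add_assoc]

lemma Matrix.PosSemidef.apply_eq_zero {n : Type} [Fintype n] {M : Matrix n n ℂ}
    (hM : M.PosSemidef) {i j : n} (h : M i i = 0) : M i j = 0 := by
  have := (hM.submatrix ![i, j]).det_nonneg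
  rw [det_fin_two] at this
  simp only [submatrix_apply, cons_val_zero, cons_val_one, h, zero_mul, zero_sub] at this
  rw [← hM.1.apply j i, Complex.star_def, Complex.mul_conj] at this
  norm_cast at this
  exact Complex.normSq_eq_zero.1 (le_antisymm (by linarith) (Complex.normSq_nonneg _))

/-- The case of singular `A`: here `B = diag(w x, 0)`, so that `[[1, w], [w̄, |w|²]] ⊗ A` accounts for
`A` and `B`, and the remainder of `C` is positive. -/
lemma Sep3.of_singular {B C : M2} {x : ℝ} (hx : 0 ≤ x)
    (h₁ : (fromBlocks (diagonal ![(x : ℂ), 0]) B Bᴴ C).PosSemidef)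
    (h₂ : (fromBlocks (diagonal ![(x : ℂ), 0]) Bᴴ B C).PosSemidef) :
    Sep3 (diagonal ![(x : ℂ), 0]) B C := by
  have b1 : ∀ j, B 1 j = 0 := fun j =>
    PosSemidef.apply_eq_zero h₁ (i := Sum.inl 1) (j := Sum.inr j) (by simp)
  have b2 : ∀ j, B j 1 = 0 := fun j => by
    simpa using PosSemidef.apply_eq_zero h₂ (i := Sum.inl 1) (j := Sum.inr j) (by simp)
  have b3 : x = 0 → B 0 0 = 0 := fun h =>
    PosSemidef.apply_eq_zero h₁ (i := Sum.inl 0) (j := Sum.inr 0) (by simp [h])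
  -- for `x = 0` the value of `w` is irrelevant, since then `B 0 0 = 0`
  obtain ⟨w, hw⟩ : ∃ w : ℂ, B 0 0 = w * x := by
    by_cases h : x = 0
    · exact ⟨0, by simp [b3 h]⟩
    · exact ⟨B 0 0 / x, by field_simp⟩
  have hB : B = diagonal ![w * x, 0] := by
    ext i j
    fin_cases i <;> fin_cases j <;> simp [b1, b2, hw]
  have hC := PosSemidef.blockTest h₁ (diagonal ![-w, 0])
  have hE : (diagonal ![(x : ℂ), 0] : M2).PosSemidef := by
    refine PosSemidef.diagonal fun i => ?_
    fin_cases i <;> simp [hx]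
  have hp : (vecMulVec ![1, star w] (star ![1, star w])).PosSemidef :=
    posSemidef_vecMulVec_self_star _
  convert (Sep3.of_product hp hE).add (Sep3.corner hC) using 1
  · simp [vecMulVec]
  · rw [hB]; ext i j
    fin_cases i <;> fin_cases j <;> simp [vecMulVec]
  · rw [hB]; ext i j
    fin_cases i <;> fin_cases j <;> simp [vecMulVec, diagonal_conjTranspose]
    ring

lemma Matrix.PosSemidef.blockConj {A B C : M2} (h : (fromBlocks A B Bᴴ C).PosSemidef) (S : M2) :
    (fromBlocks (Sᴴ * A * S) (Sᴴ * B * S) (Sᴴ * B * S)ᴴ (Sᴴ * C * S)).PosSemidef := by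
  convert h.conjTranspose_mul_mul_same (fromBlocks S 0 0 S) using 1
  simp [fromBlocks_conjTranspose, fromBlocks_multiply, Matrix.mul_assoc]

lemma Sep3.of_ppt {A B C : M2} (h₁ : (fromBlocks A B Bᴴ C).PosSemidef)
    (h₂ : (fromBlocks A Bᴴ B C).PosSemidef) : Sep3 A B C := by
  have hA : A.PosSemidef := h₁.submatrix Sum.inl
  obtain ⟨U, x, y, hxy, hU, hU', hd⟩ := exists_diag hA.1
  have hdA := hA.conjTranspose_mul_mul_same U
  rw [hd, posSemidef_diagonal_iff] at hdA
  have hy : 0 ≤ y := by simpa using hdA 1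
  have red : ∀ S T : M2, S * T = 1 →
      Sep3 (Sᴴ * A * S) (Sᴴ * B * S) (Sᴴ * C * S) → Sep3 A B C := by
    intro S T hST h
    have k : ∀ X : M2, Tᴴ * (Sᴴ * X * S) * T = X := fun X => by
      simp only [Matrix.mul_assoc, hST, Matrix.mul_one]
      rw [← Matrix.mul_assoc, ← conjTranspose_mul, hST, conjTranspose_one, Matrix.one_mul]
    simpa only [k] using h.conj T
  have h₂' : (fromBlocks A Bᴴ Bᴴᴴ C).PosSemidef := by simpa using h₂
  rcases hy.eq_or_lt with rfl | hy
  · refine red U Uᴴ hU' ?_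
    have k₁ := PosSemidef.blockConj h₁ U
    have k₂ := PosSemidef.blockConj h₂' U
    have e : Uᴴ * Bᴴ * U = (Uᴴ * B * U)ᴴ := by simp [conjTranspose_mul, Matrix.mul_assoc]
    rw [e, conjTranspose_conjTranspose] at k₂
    rw [hd] at k₁ k₂ ⊢
    exact Sep3.of_singular hxy (by simpa using k₁) (by simpa using k₂)
  · have hx : 0 < x := hy.trans_le hxy
    have hx' : (√x : ℂ) ≠ 0 := by exact_mod_cast (Real.sqrt_pos.2 hx).ne'
    have hy' : (√y : ℂ) ≠ 0 := by exact_mod_cast (Real.sqrt_pos.2 hy).ne'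
    have hxs : (x : ℂ) = √x * √x := by exact_mod_cast (Real.mul_self_sqrt hx.le).symm
    have hys : (y : ℂ) = √y * √y := by exact_mod_cast (Real.mul_self_sqrt hy.le).symm
    let D : M2 := diagonal ![(√x : ℂ)⁻¹, (√y : ℂ)⁻¹]
    let D' : M2 := diagonal ![(√x : ℂ), (√y : ℂ)]
    have hDD : D * D' = 1 := by
      ext i j
      fin_cases i <;> fin_cases j <;> simp [D, D', hx', hy']
    have hDA : (U * D)ᴴ * A * (U * D) = 1 := by
      have : (U * D)ᴴ * A * (U * D) = Dᴴ * (Uᴴ * A * U) * D := by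
        simp only [conjTranspose_mul, Matrix.mul_assoc]
      rw [this, hd, hxs, hys]
      ext i j
      fin_cases i <;> fin_cases j <;> simp [D, diagonal_conjTranspose, hx', hy']
    refine red (U * D) (D' * Uᴴ) ?_ ?_
    · rw [Matrix.mul_assoc, ← Matrix.mul_assoc D, hDD, Matrix.one_mul, hU']
    · have k₁ := PosSemidef.blockConj h₁ (U * D)
      have k₂ := PosSemidef.blockConj h₂' (U * D)
      rw [hDA] at k₁ k₂ ⊢
      have e : (U * D)ᴴ * Bᴴ * (U * D) = ((U * D)ᴴ * B * (U * D))ᴴ := by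
        simp [conjTranspose_mul, Matrix.mul_assoc]
      rw [e] at k₂
      generalize (U * D)ᴴ * B * (U * D) = B' at *
      have l₁ := PosSemidef.blockTest k₁ (-B')
      have l₂ := PosSemidef.blockTest k₂ (-B'ᴴ)
      refine Sep3.of_one ?_ ?_
      · convert l₁ using 1
        simp; abel
      · convert l₂ using 1
        simp; abel

/-! ### The two-qubit criterion -/

/-- Every PPT matrix on the `2 ⊗ 2` system is separable. -/
theorem ppt_two_qubit_separable (a : Matrix (Fin 2 × Fin 2) (Fin 2 × Fin 2) ℂ)
    (h₁ : a.PosSemidef) (h₂ : (ptrans 2 2 a).PosSemidef) :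
    SepState 2 2 a := by
  refine Sep3.sepState h₁.1 (Sep3.of_ppt ?_ ?_)
  · convert h₁.submatrix (Sum.elim (Prod.mk 0) (Prod.mk 1)) using 1
    ext (i | i) (j | j) <;> simp [h₁.1.apply]
  · refine Eq.mp (congrArg Matrix.PosSemidef ?_)
      (h₂.submatrix (Sum.elim (Prod.mk 0) (Prod.mk 1))).transpose
    refine Matrix.ext ?_
    rintro (i | i) (j | j) <;> simp [ptrans, h₁.1.apply]
end

section
/- In the 2⊗2 case the PPT cone coincides with the injective cone: every Hermitian block-positive matrix M indexed by (Fin 2 × Fin 2) can be written as M = P + Γ(Q) for some PSD matrices P and Q indexed by (Fin 2 × Fin 2). -/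
/-!
Why two-qubit block-positive matrices are decomposable.  Write `⟨v ⊗ w, M (v ⊗ w)⟩` for the
biquadratic form of `M`.

* Subtracting from `M` the multiple `ε • 1`, with `ε` the minimum of the form on pairs of unit
  vectors, keeps block-positivity and creates a product vector `v₀ ⊗ w₀` on which the form vanishes.
* Decomposability and block-positivity are both invariant under local congruences
  `M ↦ (U ⊗ V)ᴴ M (U ⊗ V)` (`IsBlockPos.congr`, `Decomposable.of_congr`), so one may assume
  `v₀ = w₀ = e₀`.  Then `M₀₀,₀₀ = 0`, and nonnegativity near `e₀ ⊗ e₀` forces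
  `M₀₀,₀₁ = M₀₀,₁₀ = 0`.  Diagonal local unitaries make `b = M₀₀,₁₁` and `c = M₀₁,₁₀` real
  and nonnegative.
* On `v = (t, 1)`, `w = (s, 1)` the form is now an inhomogeneous *quadratic* polynomial in
  `(t, s)`, rather than a biquadratic one.  It separates into a polynomial in the real parts and one
  in the imaginary parts, so completing the square is always possible
  (`exists_center`), and the leading part has `(b + c)² ≤ a d`.  This inequality is what allows
  `a` and `d` to be shared out between a PSD matrix with off-diagonal entry `c` and one
  with off-diagonal entry `b` (`exists_split`); the second is placed in `Γ(Q)`, since `Γ` exchanges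
  the positions `(00,11)` and `(01,10)`.  The square completion is compatible with both
  parts, which gives `P` and `Q` (`decomposable_of_normal_form`).
-/

open Matrix ComplexOrder

/-- Block-positive: `⟨v ⊗ w, M (v ⊗ w)⟩ ≥ 0` for all product vectors. -/
def IsBlockPos (d n : ℕ) (M : Matrix (Fin d × Fin n) (Fin d × Fin n) ℂ) : Prop :=
  ∀ (v : Fin d → ℂ) (w : Fin n → ℂ),
    0 ≤ star (fun p : Fin d × Fin n => v p.1 * w p.2) ⬝ᵥ M *ᵥ (fun p : Fin d × Fin n => v p.1 * w p.2)

open scoped Kronecker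

/-- `M` is the sum of a positive semidefinite matrix and the partial transpose of one. -/
def Decomposable (M : Matrix (Fin 2 × Fin 2) (Fin 2 × Fin 2) ℂ) : Prop :=
  ∃ P Q : Matrix (Fin 2 × Fin 2) (Fin 2 × Fin 2) ℂ,
    P.PosSemidef ∧ Q.PosSemidef ∧ M = P + ptrans 2 2 Q

/-- The product vector `v ⊗ w`. -/
def prodVec (v w : Fin 2 → ℂ) : Fin 2 × Fin 2 → ℂ := fun p => v p.1 * w p.2

/-! ### Real quadratic polynomials -/

lemma eq_zero_of_forall_quadratic {α β : ℝ} (h : ∀ x : ℝ, 0 ≤ 2 * α * x + β * x ^ 2) : α = 0 := by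
  by_contra hα
  have hβ : 0 ≤ β := by nlinarith [h 1, h (-1)]
  have h1 := h (-α / (β + 1))
  have h2 : 2 * α * (-α / (β + 1)) + β * (-α / (β + 1)) ^ 2
      = -(α ^ 2 * (β + 2) / (β + 1) ^ 2) := by
    have : β + 1 ≠ 0 := by positivity
    field_simp
    ring
  have h3 : 0 < α ^ 2 * (β + 2) / (β + 1) ^ 2 := by positivity
  linarith

lemma eq_zero_of_forall_affine {α g : ℝ} (h : ∀ x : ℝ, 0 ≤ α * x + g) : α = 0 := by
  by_contra hα
  have h1 := h (-(g + 1) / α)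
  have h2 : α * (-(g + 1) / α) + g = -1 := by field_simp; ring
  linarith

lemma leading_coeff_nonneg {α β g : ℝ} (h : ∀ x : ℝ, 0 ≤ α * x ^ 2 + 2 * β * x + g) : 0 ≤ α := by
  by_contra! hα
  have hg : 0 ≤ g := by simpa using h 0
  have h1 := h ((g + 1) / (-α) + 1)
  have h2 := h (-((g + 1) / (-α) + 1))
  have h4 : 0 ≤ (g + 1) / (-α) := div_nonneg (by linarith) (by linarith)
  have h3 : -α * ((g + 1) / (-α)) = g + 1 := by
    have : -α ≠ 0 := by linarith
    rw [mul_div_assoc', mul_comm, mul_div_assoc, div_self this, mul_one]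
  nlinarith

/-- A real quadratic polynomial in two variables that is bounded below has a positive semidefinite
leading part. -/
lemma leading_part_nonneg {a d h e f g : ℝ}
    (H : ∀ x y : ℝ, 0 ≤ a * x ^ 2 + d * y ^ 2 + 2 * h * x * y + 2 * e * x + 2 * f * y + g) :
    0 ≤ a ∧ 0 ≤ d ∧ h ^ 2 ≤ a * d := by
  have key : ∀ x y : ℝ, 0 ≤ a * x ^ 2 + d * y ^ 2 + 2 * h * x * y := fun x y =>
    leading_coeff_nonneg (β := e * x + f * y) (g := g) fun r => by
      have := H (r * x) (r * y)
      nlinarith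
  have ha : 0 ≤ a := by simpa using key 1 0
  have hd : 0 ≤ d := by simpa using key 0 1
  refine ⟨ha, hd, ?_⟩
  rcases ha.eq_or_lt with rfl | ha'
  · have : h = 0 := eq_zero_of_forall_quadratic (β := d) fun y => by
      have := key 1 y
      nlinarith
    simp [this]
  · have := key (-h) a
    have h2 : 0 ≤ a * (a * d - h ^ 2) := by nlinarith
    have := nonneg_of_mul_nonneg_right h2 ha'
    linarith

/-- A real quadratic polynomial in two variables that is bounded below has a critical point: its
linear part lies in the range of its leading part, even when the latter is degenerate. -/
lemma exists_center {a d h e f g : ℝ}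
    (H : ∀ x y : ℝ, 0 ≤ a * x ^ 2 + d * y ^ 2 + 2 * h * x * y + 2 * e * x + 2 * f * y + g) :
    ∃ x y : ℝ, a * x + h * y = e ∧ h * x + d * y = f := by
  obtain ⟨ha, hd, hh⟩ := leading_part_nonneg H
  rcases hh.eq_or_lt with hdeg | hlt
  · rcases ha.eq_or_lt with rfl | ha'
    · have hh0 : h = 0 := by nlinarith
      subst hh0
      have he : e = 0 := by
        have := eq_zero_of_forall_affine (α := 2 * e) (g := g) fun x => by
          have := H x 0
          nlinarith
        linarith
      rcases hd.eq_or_lt with rfl | hd'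
      · have hf : f = 0 := by
          have := eq_zero_of_forall_affine (α := 2 * f) (g := g) fun x => by
            have := H 0 x
            nlinarith
          linarith
        exact ⟨0, 0, by simp [he], by simp [hf]⟩
      · exact ⟨0, f / d, by simp [he], by field_simp; simp⟩
    · have hk : h * e = a * f := by
        -- The leading part has kernel spanned by `(h, -a)`, where the polynomial is affine.
        have := eq_zero_of_forall_affine (α := 2 * e * h - 2 * f * a) (g := g) fun x => by
          have h1 := H (x * h) (-(x * a))
          have h2 : a * (x * h) ^ 2 + d * (-(x * a)) ^ 2 + 2 * h * (x * h) * (-(x * a))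
              = a * x ^ 2 * (a * d - h ^ 2) := by ring
          rw [← hdeg] at h2
          nlinarith
        linarith
      refine ⟨e / a, 0, by field_simp; simp, ?_⟩
      field_simp
      linarith
  · have hD : a * d - h ^ 2 ≠ 0 := by linarith
    refine ⟨(d * e - h * f) / (a * d - h ^ 2), (a * f - h * e) / (a * d - h ^ 2), ?_, ?_⟩ <;>
    · rw [mul_div_assoc', mul_div_assoc', ← add_div, div_eq_iff hD]
      ring

lemma binary_form_nonneg {a d c : ℝ} (ha : 0 ≤ a) (hd : 0 ≤ d) (hc : c ^ 2 ≤ a * d) (x y : ℝ) :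
    0 ≤ a * x ^ 2 + d * y ^ 2 + 2 * c * x * y := by
  rcases ha.eq_or_lt with rfl | ha'
  · have : c = 0 := by nlinarith
    subst this
    nlinarith [mul_nonneg hd (sq_nonneg y)]
  · refine nonneg_of_mul_nonneg_right (a := a) ?_ ha'
    nlinarith [sq_nonneg (a * x + c * y), mul_nonneg (sub_nonneg.2 hc) (sq_nonneg y)]

/-- Since `b + c ≤ √(a d)`, the diagonal `(a, d)` can be shared out, in the proportion `c : b`,
between two positive semidefinite `2 × 2` matrices with off-diagonal entries `c` and `b`. -/
lemma exists_split {a d b c : ℝ} (ha : 0 ≤ a) (hd : 0 ≤ d) (hb : 0 ≤ b) (hc : 0 ≤ c)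
    (h : (b + c) ^ 2 ≤ a * d) :
    ∃ a₁ a₂ d₁ d₂ : ℝ, 0 ≤ a₁ ∧ 0 ≤ a₂ ∧ 0 ≤ d₁ ∧ 0 ≤ d₂ ∧ a₁ + a₂ = a ∧ d₁ + d₂ = d ∧
      c ^ 2 ≤ a₁ * d₁ ∧ b ^ 2 ≤ a₂ * d₂ := by
  rcases (add_nonneg hb hc).eq_or_lt with h0 | hpos
  · have hb0 : b = 0 := by linarith
    have hc0 : c = 0 := by linarith
    subst hb0 hc0
    exact ⟨a, 0, d, 0, ha, le_rfl, hd, le_rfl, by simp, by simp, by nlinarith, by simp⟩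
  · have hne : b + c ≠ 0 := hpos.ne'
    have hr : ∀ r : ℝ, r ^ 2 ≤ a * (r / (b + c)) * (d * (r / (b + c))) := fun r => by
      have : a * (r / (b + c)) * (d * (r / (b + c))) = r ^ 2 * ((a * d) / (b + c) ^ 2) := by
        field_simp
      rw [this]
      have : 1 ≤ (a * d) / (b + c) ^ 2 := by
        rw [one_le_div (by positivity)]
        exact h
      nlinarith [sq_nonneg r]
    refine ⟨a * (c / (b + c)), a * (b / (b + c)), d * (c / (b + c)), d * (b / (b + c)),
      by positivity, by positivity, by positivity, by positivity, ?_, ?_, hr c, hr b⟩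
    · field_simp
      ring
    · field_simp
      ring

/-! ### Matrices in normal form -/

/-- The matrix of the Hermitian form
`a |u₀₁ + x u₁₁|² + d |u₁₀ + y u₁₁|² + 2 c Re (conj (u₀₁ + x u₁₁) (u₁₀ + y u₁₁)) + k |u₁₁|²`, written
as a congruence by a `3 × 4` matrix. -/
noncomputable def squareForm (a d c k : ℝ) (x y : ℂ) :
    Matrix (Fin 2 × Fin 2) (Fin 2 × Fin 2) ℂ :=
  let W : Matrix (Fin 3) (Fin 2 × Fin 2) ℂ :=
    Matrix.of ![fun p => !![0, 1; 0, x] p.1 p.2, fun p => !![0, 0; 1, y] p.1 p.2,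
      fun p => !![0, 0; 0, 1] p.1 p.2]
  Wᴴ * !![(a : ℂ), c, 0; c, d, 0; 0, 0, k] * W

lemma squareForm_posSemidef {a d c k : ℝ} (ha : 0 ≤ a) (hd : 0 ≤ d) (hc : c ^ 2 ≤ a * d)
    (hk : 0 ≤ k) (x y : ℂ) : (squareForm a d c k x y).PosSemidef := by
  refine Matrix.PosSemidef.conjTranspose_mul_mul_same ?_ _
  refine Matrix.PosSemidef.of_dotProduct_mulVec_nonneg ?_ fun u => ?_
  · ext i j
    fin_cases i <;> fin_cases j <;> simp [Matrix.conjTranspose_apply]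
  · have h1 := binary_form_nonneg ha hd hc (u 0).re (u 1).re
    have h2 := binary_form_nonneg ha hd hc (u 0).im (u 1).im
    have h3 := mul_nonneg hk (add_nonneg (sq_nonneg (u 2).re) (sq_nonneg (u 2).im))
    rw [Complex.le_def]
    simp [dotProduct, Matrix.mulVec, Fin.sum_univ_three]
    constructor
    · nlinarith
    · ring

/-- Decomposability of a block-positive matrix with vanishing `(00,00)`, `(00,01)` and `(00,10)`
entries and real nonnegative `(00,11)` and `(01,10)` entries `b` and `c`. -/
lemma decomposable_of_normal_form {M : Matrix (Fin 2 × Fin 2) (Fin 2 × Fin 2) ℂ}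
    (hM : M.IsHermitian) (hbp : IsBlockPos 2 2 M)
    (h0 : M (0, 0) (0, 0) = 0) (h1 : M (0, 0) (0, 1) = 0) (h2 : M (0, 0) (1, 0) = 0)
    {b c : ℝ} (hb : 0 ≤ b) (hc : 0 ≤ c) (hMb : M (0, 0) (1, 1) = b) (hMc : M (0, 1) (1, 0) = c) :
    Decomposable M := by
  have hdiag : ∀ p, M p p = ((M p p).re : ℂ) := fun p => (hM.coe_re_apply_self p).symm
  have hMa := hdiag (0, 1)
  have hMd := hdiag (1, 0)
  have hMg := hdiag (1, 1)
  generalize (M (0, 1) (0, 1)).re = a at hMa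
  generalize (M (1, 0) (1, 0)).re = d at hMd
  generalize (M (1, 1) (1, 1)).re = g at hMg
  obtain ⟨e, hMe⟩ : ∃ e, M (0, 1) (1, 1) = e := ⟨_, rfl⟩
  obtain ⟨f, hMf⟩ : ∃ f, M (1, 0) (1, 1) = f := ⟨_, rfl⟩
  have h1' : M (0, 1) (0, 0) = 0 := by rw [← hM.apply, h1]; simp
  have h2' : M (1, 0) (0, 0) = 0 := by rw [← hM.apply, h2]; simp
  have hMb' : M (1, 1) (0, 0) = b := by rw [← hM.apply, hMb]; simp
  have hMc' : M (1, 0) (0, 1) = c := by rw [← hM.apply, hMc]; simp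
  have hMe' : M (1, 1) (0, 1) = star e := by rw [← hM.apply, hMe]
  have hMf' : M (1, 1) (1, 0) = star f := by rw [← hM.apply, hMf]
  -- The form on `(t, 1) ⊗ (s, 1)` with `t = t₁ + i t₂` and `s = s₁ + i s₂`.
  have H : ∀ t₁ t₂ s₁ s₂ : ℝ,
      0 ≤ (a * t₁ ^ 2 + d * s₁ ^ 2 + 2 * (b + c) * t₁ * s₁ + 2 * e.re * t₁ + 2 * f.re * s₁)
        + (a * t₂ ^ 2 + d * s₂ ^ 2 + 2 * (c - b) * t₂ * s₂ + 2 * e.im * t₂ + 2 * f.im * s₂)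
        + g := by
    intro t₁ t₂ s₁ s₂
    have := (Complex.le_def.1 (hbp ![⟨t₁, t₂⟩, 1] ![⟨s₁, s₂⟩, 1])).1
    simp [dotProduct, Matrix.mulVec, Fintype.sum_prod_type, h0, h1, h2, hMb, hMc, hMa, hMd, hMg,
      hMe, hMf, h1', h2', hMb', hMc', hMe', hMf'] at this
    nlinarith
  have Hre : ∀ x y : ℝ, 0 ≤ a * x ^ 2 + d * y ^ 2 + 2 * (b + c) * x * y + 2 * e.re * x
      + 2 * f.re * y + g := fun x y => by simpa using H x 0 y 0
  have Him : ∀ x y : ℝ, 0 ≤ a * x ^ 2 + d * y ^ 2 + 2 * (c - b) * x * y + 2 * e.im * x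
      + 2 * f.im * y + g := fun x y => by simpa using H 0 x 0 y
  obtain ⟨ha, hd, hbc⟩ := leading_part_nonneg Hre
  obtain ⟨x₁, y₁, hx₁, hy₁⟩ := exists_center Hre
  obtain ⟨x₂, y₂, hx₂, hy₂⟩ := exists_center Him
  obtain ⟨a₁, a₂, d₁, d₂, ha₁, ha₂, hd₁, hd₂, rfl, rfl, hcs, hbs⟩ := exists_split ha hd hb hc hbc
  -- The minimum of the form, attained at `(t, s) = -(x, y)`.
  set k : ℝ := g - (e.re * x₁ + f.re * y₁ + e.im * x₂ + f.im * y₂) with hk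
  have hk0 : 0 ≤ k := by
    have := H (-x₁) (-x₂) (-y₁) (-y₂)
    rw [hk, ← hx₁, ← hx₂, ← hy₁, ← hy₂]
    rw [← hx₁, ← hx₂, ← hy₁, ← hy₂] at this
    nlinarith
  refine ⟨squareForm a₁ d₁ c k ⟨x₁, x₂⟩ ⟨y₁, y₂⟩, squareForm a₂ d₂ b 0 ⟨x₁, x₂⟩ ⟨y₁, -y₂⟩,
    squareForm_posSemidef ha₁ hd₁ hcs hk0 _ _, squareForm_posSemidef ha₂ hd₂ hbs le_rfl _ _, ?_⟩
  ext ⟨i, j⟩ ⟨i', j'⟩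
  fin_cases i <;> fin_cases j <;> fin_cases i' <;> fin_cases j' <;>
    simp [squareForm, ptrans, Matrix.mul_apply, Fin.sum_univ_three, h0, h1, h2, hMb, hMc, hMa, hMd,
      hMg, hMe, hMf, h1', h2', hMb', hMc', hMe', hMf'] <;>
    apply Complex.ext <;> simp [hk, ← hx₁, ← hx₂, ← hy₁, ← hy₂] <;> ring

/-! ### Local congruences -/

lemma kronecker_mulVec_prodVec (U V : Matrix (Fin 2) (Fin 2) ℂ) (v w : Fin 2 → ℂ) :
    (U ⊗ₖ V) *ᵥ prodVec v w = prodVec (U *ᵥ v) (V *ᵥ w) := by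
  ext ⟨i, j⟩
  simp [prodVec, Matrix.mulVec, dotProduct, Fintype.sum_prod_type]
  ring

lemma IsBlockPos.congr {M : Matrix (Fin 2 × Fin 2) (Fin 2 × Fin 2) ℂ} (h : IsBlockPos 2 2 M)
    (U V : Matrix (Fin 2) (Fin 2) ℂ) : IsBlockPos 2 2 ((U ⊗ₖ V)ᴴ * M * (U ⊗ₖ V)) := by
  intro v w
  have := h (U *ᵥ v) (V *ᵥ w)
  change 0 ≤ star (prodVec _ _) ⬝ᵥ M *ᵥ prodVec _ _ at this
  change 0 ≤ star (prodVec _ _) ⬝ᵥ _ *ᵥ prodVec _ _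
  rwa [← kronecker_mulVec_prodVec, Matrix.star_mulVec, ← Matrix.dotProduct_mulVec,
    Matrix.mulVec_mulVec, Matrix.mulVec_mulVec] at this

/-- The partial transpose turns congruence by `U ⊗ V` into congruence by `U ⊗ V̄`. -/
lemma ptrans_congr (U V : Matrix (Fin 2) (Fin 2) ℂ)
    (Q : Matrix (Fin 2 × Fin 2) (Fin 2 × Fin 2) ℂ) :
    ptrans 2 2 ((U ⊗ₖ V.map star) * Q * (U ⊗ₖ V.map star)ᴴ)
      = (U ⊗ₖ V) * ptrans 2 2 Q * (U ⊗ₖ V)ᴴ := by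
  ext ⟨i, j⟩ ⟨i', j'⟩
  simp [ptrans, Matrix.mul_apply, Fintype.sum_prod_type]
  ring

lemma Decomposable.of_congr {M : Matrix (Fin 2 × Fin 2) (Fin 2 × Fin 2) ℂ}
    {U V : Matrix (Fin 2) (Fin 2) ℂ} (hU : U * Uᴴ = 1) (hV : V * Vᴴ = 1)
    (h : Decomposable ((U ⊗ₖ V)ᴴ * M * (U ⊗ₖ V))) : Decomposable M := by
  obtain ⟨P, Q, hP, hQ, hPQ⟩ := h
  refine ⟨(U ⊗ₖ V) * P * (U ⊗ₖ V)ᴴ, (U ⊗ₖ V.map star) * Q * (U ⊗ₖ V.map star)ᴴ,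
    hP.mul_mul_conjTranspose_same _, hQ.mul_mul_conjTranspose_same _, ?_⟩
  have hK : (U ⊗ₖ V) * (U ⊗ₖ V)ᴴ = 1 := by
    rw [Matrix.conjTranspose_kronecker, ← Matrix.mul_kronecker_mul, hU, hV,
      Matrix.one_kronecker_one]
  rw [ptrans_congr, ← Matrix.add_mul, ← Matrix.mul_add, ← hPQ]
  calc M = ((U ⊗ₖ V) * (U ⊗ₖ V)ᴴ) * M * ((U ⊗ₖ V) * (U ⊗ₖ V)ᴴ) := by simp [hK]
    _ = _ := by simp only [Matrix.mul_assoc]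

/-! ### Reduction to the normal form -/

/-- Any two phases can be written as `p q` and `p q̄` with `p`, `q` unimodular, so the diagonal local
unitaries `diag(p, 1)` and `diag(q, 1)` make two matrix entries real and nonnegative at once. -/
lemma exists_phases (b c : ℂ) : ∃ p q : ℂ, p * star p = 1 ∧ q * star q = 1 ∧
    star (p * q) * b = ‖b‖ ∧ star p * q * c = ‖c‖ := by
  have key : ∀ r : ℝ, Complex.exp (r * Complex.I) * star (Complex.exp (r * Complex.I)) = 1 := by
    intro r
    rw [Complex.star_def, ← Complex.exp_conj, ← Complex.exp_add]
    simp
  have hb := Complex.norm_mul_exp_arg_mul_I b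
  have hc := Complex.norm_mul_exp_arg_mul_I c
  generalize b.arg = φ at hb
  generalize c.arg = ψ at hc
  refine ⟨Complex.exp (((φ + ψ) / 2 : ℝ) * Complex.I),
    Complex.exp (((φ - ψ) / 2 : ℝ) * Complex.I), key _, key _, ?_, ?_⟩
  · nth_rewrite 1 [← hb]
    rw [Complex.star_def, ← Complex.exp_add, ← Complex.exp_conj, mul_left_comm, ← Complex.exp_add]
    convert mul_one _
    rw [← Complex.exp_zero]
    congr 1
    simp only [map_add, map_mul, Complex.conj_ofReal, Complex.conj_I]
    push_cast
    ring
  · nth_rewrite 1 [← hc]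
    rw [Complex.star_def, ← Complex.exp_conj, ← Complex.exp_add, mul_left_comm, ← Complex.exp_add]
    convert mul_one _
    rw [← Complex.exp_zero]
    congr 1
    simp only [map_mul, Complex.conj_ofReal, Complex.conj_I]
    push_cast
    ring

lemma decomposable_of_zero_corner {M : Matrix (Fin 2 × Fin 2) (Fin 2 × Fin 2) ℂ}
    (hM : M.IsHermitian) (hbp : IsBlockPos 2 2 M) (h0 : M (0, 0) (0, 0) = 0) :
    Decomposable M := by
  have hbp' := fun v w => (Complex.le_def.1 (hbp v w)).1
  -- The form is nonnegative near its zero `e₀ ⊗ e₀`, so its first derivatives vanish there.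
  have h1 : M (0, 0) (0, 1) = 0 := by
    have hs : M (0, 1) (0, 0) = star (M (0, 0) (0, 1)) := (hM.apply _ _).symm
    apply Complex.ext
    · refine eq_zero_of_forall_quadratic (β := (M (0, 1) (0, 1)).re) fun x => ?_
      have := hbp' ![1, 0] ![1, x]
      simp [dotProduct, Matrix.mulVec, Fintype.sum_prod_type, h0, hs] at this
      simp
      nlinarith
    · refine eq_zero_of_forall_quadratic (β := (M (0, 1) (0, 1)).re) fun x => ?_
      have := hbp' ![1, 0] ![1, ⟨0, -x⟩]
      simp [dotProduct, Matrix.mulVec, Fintype.sum_prod_type, h0, hs] at this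
      simp
      nlinarith
  have h2 : M (0, 0) (1, 0) = 0 := by
    have hs : M (1, 0) (0, 0) = star (M (0, 0) (1, 0)) := (hM.apply _ _).symm
    apply Complex.ext
    · refine eq_zero_of_forall_quadratic (β := (M (1, 0) (1, 0)).re) fun x => ?_
      have := hbp' ![1, x] ![1, 0]
      simp [dotProduct, Matrix.mulVec, Fintype.sum_prod_type, h0, hs] at this
      simp
      nlinarith
    · refine eq_zero_of_forall_quadratic (β := (M (1, 0) (1, 0)).re) fun x => ?_
      have := hbp' ![1, ⟨0, -x⟩] ![1, 0]
      simp [dotProduct, Matrix.mulVec, Fintype.sum_prod_type, h0, hs] at this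
      simp
      nlinarith
  obtain ⟨p, q, hp, hq, hb, hc⟩ := exists_phases (M (0, 0) (1, 1)) (M (0, 1) (1, 0))
  have hD : ∀ z : ℂ, z * star z = 1 → !![z, 0; 0, 1] * !![z, 0; 0, 1]ᴴ = 1 := by
    intro z hz
    ext i j
    fin_cases i <;> fin_cases j <;> simp [Matrix.mul_apply]
    simpa using hz
  refine Decomposable.of_congr (hD p hp) (hD q hq) ?_
  refine decomposable_of_normal_form (b := ‖M (0, 0) (1, 1)‖) (c := ‖M (0, 1) (1, 0)‖)
    (Matrix.isHermitian_conjTranspose_mul_mul _ hM) (hbp.congr _ _) ?_ ?_ ?_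
    (norm_nonneg _) (norm_nonneg _) ?_ ?_
  · simp [Matrix.mul_apply, Fintype.sum_prod_type, h0]
  · simp [Matrix.mul_apply, Fintype.sum_prod_type, h1]
  · simp [Matrix.mul_apply, Fintype.sum_prod_type, h2]
  · rw [← hb]
    simp [Matrix.mul_apply, Fintype.sum_prod_type]
  · rw [← hc]
    simp [Matrix.mul_apply, Fintype.sum_prod_type]
    ring

/-- A unit vector of `ℂ²` is the first column of a unitary matrix. -/
lemma exists_unitary_col (v : Fin 2 → ℂ) (hv : star v ⬝ᵥ v = 1) :
    ∃ U : Matrix (Fin 2) (Fin 2) ℂ, U * Uᴴ = 1 ∧ U *ᵥ ![1, 0] = v := by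
  refine ⟨!![v 0, -star (v 1); v 1, star (v 0)], ?_, ?_⟩
  · simp [dotProduct] at hv
    rw [mul_eq_one_comm]
    ext i j
    fin_cases i <;> fin_cases j <;> simp [Matrix.mul_apply]
    · exact hv
    · ring
    · ring
    · linear_combination hv
  · ext i
    fin_cases i <;> simp [Matrix.mulVec, dotProduct]

lemma isCompact_unit : IsCompact {v : Fin 2 → ℂ | star v ⬝ᵥ v = 1} := by
  refine Metric.isCompact_of_isClosed_isBounded ?_ ?_
  · exact isClosed_eq (by simp only [dotProduct]; fun_prop) continuous_const
  · refine (Metric.isBounded_closedBall (x := 0) (r := 1)).subset fun v hv => ?_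
    rw [mem_closedBall_zero_iff, pi_norm_le_iff_of_nonneg zero_le_one]
    have h : ‖v 0‖ ^ 2 + ‖v 1‖ ^ 2 = 1 := by
      have := congrArg Complex.re (show star v ⬝ᵥ v = 1 from hv)
      simp [dotProduct] at this
      rw [Complex.sq_norm, Complex.sq_norm, Complex.normSq_apply, Complex.normSq_apply]
      linarith
    intro i
    fin_cases i
    · change ‖v 0‖ ≤ 1
      nlinarith [norm_nonneg (v 0), sq_nonneg ‖v 1‖]
    · change ‖v 1‖ ≤ 1
      nlinarith [norm_nonneg (v 1), sq_nonneg ‖v 0‖]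

/-- Every vector of `ℂ²` is a multiple of a unit vector. -/
lemma exists_smul_unit (v : Fin 2 → ℂ) :
    ∃ (r : ℝ) (u : Fin 2 → ℂ), star u ⬝ᵥ u = 1 ∧ v = (r : ℂ) • u := by
  set N : ℝ := Complex.normSq (v 0) + Complex.normSq (v 1) with hN
  have hvN : star v ⬝ᵥ v = N := by
    simp [dotProduct, hN, Complex.normSq_eq_conj_mul_self]
  have hN0 : 0 ≤ N := add_nonneg (Complex.normSq_nonneg _) (Complex.normSq_nonneg _)
  rcases hN0.eq_or_lt with h | h
  · refine ⟨0, ![1, 0], by simp [dotProduct], ?_⟩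
    have h0 : Complex.normSq (v 0) = 0 := by
      linarith [Complex.normSq_nonneg (v 0), Complex.normSq_nonneg (v 1)]
    have h1 : Complex.normSq (v 1) = 0 := by
      linarith [Complex.normSq_nonneg (v 0), Complex.normSq_nonneg (v 1)]
    ext i
    fin_cases i
    · simpa using Complex.normSq_eq_zero.1 h0
    · simpa using Complex.normSq_eq_zero.1 h1
  · have hs : (Real.sqrt N : ℂ) ≠ 0 := by
      exact_mod_cast (Real.sqrt_pos.2 h).ne'
    refine ⟨Real.sqrt N, ((Real.sqrt N : ℝ) : ℂ)⁻¹ • v, ?_, by simp [smul_smul, hs]⟩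
    have hsq : (Real.sqrt N : ℂ) * Real.sqrt N = N := by exact_mod_cast Real.mul_self_sqrt hN0
    simp [smul_dotProduct, dotProduct_smul, hvN]
    field_simp
    rw [sq, hsq]

/-- In the `2 ⊗ 2` case every Hermitian block-positive matrix is decomposable as
`PSD + Γ(PSD)`. -/
theorem blockPos_two_qubit_decomposable (M : Matrix (Fin 2 × Fin 2) (Fin 2 × Fin 2) ℂ)
    (hM : M.IsHermitian) (hbp : IsBlockPos 2 2 M) :
    ∃ P Q : Matrix (Fin 2 × Fin 2) (Fin 2 × Fin 2) ℂ,
      P.PosSemidef ∧ Q.PosSemidef ∧ M = P + ptrans 2 2 Q := by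
  set F : (Fin 2 → ℂ) × (Fin 2 → ℂ) → ℂ :=
    fun z => star (prodVec z.1 z.2) ⬝ᵥ M *ᵥ prodVec z.1 z.2 with hF
  have hFpos : ∀ z, 0 ≤ F z := fun z => hbp z.1 z.2
  have hcont : Continuous F := by
    simp only [hF, prodVec, dotProduct, Matrix.mulVec, Pi.star_apply]
    fun_prop
  have hne : ({v : Fin 2 → ℂ | star v ⬝ᵥ v = 1}).Nonempty := ⟨![1, 0], by simp [dotProduct]⟩
  obtain ⟨⟨v₀, w₀⟩, ⟨hv₀, hw₀⟩, hmin⟩ := (isCompact_unit.prod isCompact_unit).exists_isMinOn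
    (hne.prod hne) (Complex.continuous_re.comp hcont).continuousOn
  simp only [Set.mem_ofPred_eq] at hv₀ hw₀
  set ε : ℝ := (F (v₀, w₀)).re with hε
  have hε0 : 0 ≤ ε := (Complex.le_def.1 (hFpos _)).1
  have hεF : F (v₀, w₀) = ε :=
    Complex.ext rfl (by simpa using (Complex.le_def.1 (hFpos (v₀, w₀))).2.symm)
  have hprod : ∀ v w : Fin 2 → ℂ,
      star (prodVec v w) ⬝ᵥ prodVec v w = (star v ⬝ᵥ v) * (star w ⬝ᵥ w) := by
    intro v w
    simp [dotProduct, prodVec, Fintype.sum_prod_type]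
    ring
  have hform : ∀ v w : Fin 2 → ℂ, star (prodVec v w) ⬝ᵥ (M - (ε : ℂ) • 1) *ᵥ prodVec v w
      = F (v, w) - ε * ((star v ⬝ᵥ v) * (star w ⬝ᵥ w)) := by
    intro v w
    rw [Matrix.sub_mulVec, dotProduct_sub, Matrix.smul_mulVec, Matrix.one_mulVec, dotProduct_smul,
      hprod, smul_eq_mul]
  have hM' : (M - (ε : ℂ) • 1).IsHermitian := by
    refine hM.sub ?_
    rw [Matrix.IsHermitian, Matrix.conjTranspose_smul]
    simp
  have hbp' : IsBlockPos 2 2 (M - (ε : ℂ) • 1) := by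
    intro v w
    change 0 ≤ star (prodVec v w) ⬝ᵥ (M - (ε : ℂ) • 1) *ᵥ prodVec v w
    obtain ⟨r, v, hv, rfl⟩ := exists_smul_unit v
    obtain ⟨s, w, hw, rfl⟩ := exists_smul_unit w
    have hle : 0 ≤ F (v, w) - ε := by
      have h1 : ε ≤ (F (v, w)).re := hmin (Set.mk_mem_prod hv hw)
      have h2 := (Complex.le_def.1 (hFpos (v, w))).2
      rw [Complex.le_def]
      simp at h2 ⊢
      exact ⟨h1, h2⟩
    have hsm : prodVec ((r : ℂ) • v) ((s : ℂ) • w) = ((r * s : ℝ) : ℂ) • prodVec v w := by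
      ext p
      simp [prodVec]
      ring
    have hrs : (0 : ℂ) ≤ ((r * s * (r * s) : ℝ) : ℂ) := by
      exact_mod_cast mul_self_nonneg (r * s)
    have := mul_nonneg hrs hle
    rw [hsm, star_smul, Matrix.mulVec_smul, smul_dotProduct, dotProduct_smul, hform, hv, hw]
    convert this using 1
    simp
    ring
  obtain ⟨U, hU, hUv⟩ := exists_unitary_col v₀ hv₀
  obtain ⟨V, hV, hVw⟩ := exists_unitary_col w₀ hw₀
  have hdec : Decomposable (M - (ε : ℂ) • 1) := by
    refine Decomposable.of_congr hU hV (decomposable_of_zero_corner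
      (Matrix.isHermitian_conjTranspose_mul_mul _ hM') (hbp'.congr U V) ?_)
    have h := hform v₀ w₀
    rw [hεF, hv₀, hw₀, ← hUv, ← hVw, ← kronecker_mulVec_prodVec, Matrix.star_mulVec,
      ← Matrix.dotProduct_mulVec, Matrix.mulVec_mulVec, Matrix.mulVec_mulVec] at h
    generalize (U ⊗ₖ V)ᴴ * (M - (ε : ℂ) • 1) * (U ⊗ₖ V) = X at h ⊢
    simpa [prodVec, dotProduct, Matrix.mulVec, Fintype.sum_prod_type] using h
  obtain ⟨P, Q, hP, hQ, hPQ⟩ := hdec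
  refine ⟨P + (ε : ℂ) • 1, Q, hP.add (Matrix.PosSemidef.one.smul (by exact_mod_cast hε0)), hQ, ?_⟩
  rw [add_right_comm, ← hPQ]
  simp
end

section
/- Let d ≥ 2 and v ∈ ℂ^d. Let V₁ be the d×d matrix whose column 0 is v, whose column 1 is the entrywise complex conjugate of v, and whose remaining columns are zero; let V₂ be the matrix whose column 0 is the conjugate of v and whose column 1 is v, with remaining columns zero. Define T(a) := V₁ a V₁ᴴ + V₂ a V₂ᴴ for a ∈ M_d. Then t(T(a)) = T(a) for every a ∈ M_d (where t is the transpose map), and consequently T is a PPT map (both completely positive and copositive). -/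
/-!
Both `V₁` and `V₂` are supported on the first two columns, with columns `v, v̄` and `v̄, v`. Expanding,
`T a = (a₀₀ + a₁₁) (v v̄ᵀ + v̄ vᵀ) + (a₀₁ + a₁₀) (v vᵀ + v̄ v̄ᵀ)`, and each of the two bracketed matrices
is symmetric, so `T a` is symmetric. Complete positivity holds for any map in Kraus form
(with two Kraus operators here,
`isCP_kraus_pair`), since `(V a Vᴴ) ⊗ id_n` is conjugation by `V ⊗ 1`, and copositivity is then
immediate because `t ∘ T = T`.
-/

open Matrix ComplexOrder

/-- A sandwich `V a Vᴴ` with `V` supported on the distinct columns `z, o`, which hold `x, y`. -/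
lemma twoColumn_conj_apply {d : ℕ} {z o : Fin d} (hzo : o ≠ z) (x y : Fin d → ℂ)
    (a : Matrix (Fin d) (Fin d) ℂ) (V : Matrix (Fin d) (Fin d) ℂ)
    (hV : V = Matrix.of fun i j => if j = z then x i else if j = o then y i else 0) (i j : Fin d) :
    (V * a * Vᴴ) i j =
      x i * a z z * star (x j) + x i * a z o * star (y j) +
        y i * a o z * star (x j) + y i * a o o * star (y j) := by
  have hV' : ∀ i j, V i j = (if j = z then x i else 0) + (if j = o then y i else 0) := by
    intro i j
    subst hV
    by_cases h : j = z
    · subst h; simp [hzo.symm]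
    · simp [h]
  simp only [mul_apply, conjTranspose_apply, hV', add_mul, ite_mul, zero_mul, star_add,
    Finset.sum_add_distrib, Finset.sum_ite_eq', Finset.mem_univ, if_true,
    apply_ite star, star_zero, mul_add, mul_ite, mul_zero]
  ring

open Kronecker in
/-- `tensorExt` turns the sandwich by `V` into the sandwich by `V ⊗ 1`. -/
lemma tensorExt_kraus_pair (d n : ℕ) (V W : Matrix (Fin d) (Fin d) ℂ)
    (a : Matrix (Fin d × Fin n) (Fin d × Fin n) ℂ) :
    tensorExt d n (fun b => V * b * Vᴴ + W * b * Wᴴ) a =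
      (V ⊗ₖ (1 : Matrix (Fin n) (Fin n) ℂ)) * a * (V ⊗ₖ (1 : Matrix (Fin n) (Fin n) ℂ))ᴴ +
      (W ⊗ₖ (1 : Matrix (Fin n) (Fin n) ℂ)) * a * (W ⊗ₖ (1 : Matrix (Fin n) (Fin n) ℂ))ᴴ := by
  ext ⟨i, k⟩ ⟨j, l⟩
  simp [tensorExt, mul_apply, Fintype.sum_prod_type, one_apply, apply_ite star]

lemma isCP_kraus_pair (d : ℕ) (V W : Matrix (Fin d) (Fin d) ℂ) :
    IsCP d (fun b => V * b * Vᴴ + W * b * Wᴴ) := by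
  intro n a ha
  rw [tensorExt_kraus_pair]
  exact (ha.mul_mul_conjTranspose_same _).add (ha.mul_mul_conjTranspose_same _)

/-- The map `T(a) = V₁ a V₁ᴴ + V₂ a V₂ᴴ` from Example 3.1 satisfies `t ∘ T = T`
and is consequently a PPT map. -/
theorem example_map_transpose_invariant_and_ppt (d : ℕ) (hd : 2 ≤ d) (v : Fin d → ℂ)
    (V₁ V₂ : Matrix (Fin d) (Fin d) ℂ)
    (hV₁ : V₁ = Matrix.of fun i j =>
      if j = (⟨0, by omega⟩ : Fin d) then v i
      else if j = (⟨1, by omega⟩ : Fin d) then star (v i) else 0)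
    (hV₂ : V₂ = Matrix.of fun i j =>
      if j = (⟨0, by omega⟩ : Fin d) then star (v i)
      else if j = (⟨1, by omega⟩ : Fin d) then v i else 0)
    (T : Matrix (Fin d) (Fin d) ℂ → Matrix (Fin d) (Fin d) ℂ)
    (hT : ∀ a, T a = V₁ * a * V₁ᴴ + V₂ * a * V₂ᴴ) :
    (∀ a, (T a)ᵀ = T a) ∧ IsPPTMap d T := by
  have hsymm : ∀ a, (T a)ᵀ = T a := by
    intro a
    have hne : (⟨1, by omega⟩ : Fin d) ≠ ⟨0, by omega⟩ := by simp
    ext i j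
    simp only [hT, transpose_apply, Matrix.add_apply,
      twoColumn_conj_apply hne v (fun i => star (v i)) a V₁ hV₁,
      twoColumn_conj_apply hne (fun i => star (v i)) v a V₂ hV₂, star_star]
    ring
  have hCP : IsCP d T := by
    rw [funext hT]
    exact isCP_kraus_pair d V₁ V₂
  refine ⟨hsymm, hCP, ?_⟩
  rw [IsCoP, funext hsymm]
  exact hCP
end

section
/- Let v ∈ ℂ². Let V₁ be the 2×2 matrix whose column 0 is v and whose column 1 is the entrywise complex conjugate of v, and V₂ the matrix whose column 0 is the conjugate of v and whose column 1 is v. Then the map T(a) := V₁ a V₁ᴴ + V₂ a V₂ᴴ on M_2 is entanglement breaking: there exist finitely many vectors u_k, w_k ∈ ℂ² such that T(a) = Σ_k ⟨w_k, a w_k⟩ · u_k u_kᴴ for every a ∈ M_2. -/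
/-!
Let `X` be the swap of the two basis vectors. Then `V₂ = V₁ X`, so
`T a = V₁ (a + X a X) V₁ᴴ`. The matrix `a + X a X` commutes with `X`, hence is diagonal in the
eigenbasis `e = (1, 1)`, `f = (1, -1)` of `X`:
`a + X a X = ½ ⟨e, a e⟩ e eᴴ + ½ ⟨f, a f⟩ f fᴴ`.
Conjugating by `V₁` gives `T` in entanglement breaking form with the vectors `V₁ e = v + v̄` and
`V₁ f = v - v̄`. The factor `½ = |c|²`, `c = (1 + i) / 2`, is absorbed into these vectors.
-/

open Matrix ComplexOrder

/-- Entanglement breaking (superpositive): `T a = Σ_k ⟨w_k, a w_k⟩ • v_k v_kᴴ`. -/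
def IsEntBreaking (d : ℕ) (T : Matrix (Fin d) (Fin d) ℂ → Matrix (Fin d) (Fin d) ℂ) : Prop :=
  ∃ (N : ℕ) (v w : Fin N → (Fin d → ℂ)),
    ∀ a, T a = ∑ k, (star (w k) ⬝ᵥ a *ᵥ (w k)) • Matrix.vecMulVec (v k) (star (v k))

/-- In dimension 2, the map `T(a) = V₁ a V₁ᴴ + V₂ a V₂ᴴ` from Example 3.1 is
entanglement breaking. -/
theorem example_map_entBreaking (v : Fin 2 → ℂ)
    (V₁ V₂ : Matrix (Fin 2) (Fin 2) ℂ)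
    (hV₁ : V₁ = Matrix.of fun i j => if j = 0 then v i else star (v i))
    (hV₂ : V₂ = Matrix.of fun i j => if j = 0 then star (v i) else v i) :
    IsEntBreaking 2 (fun a => V₁ * a * V₁ᴴ + V₂ * a * V₂ᴴ) := by
  refine ⟨2, ![fun i => (1 + Complex.I) / 2 * (v i + star (v i)),
    fun i => (1 + Complex.I) / 2 * (v i - star (v i))], ![![1, 1], ![1, -1]], fun a => ?_⟩
  have hI : Complex.I ^ 2 = -1 := Complex.I_sq
  subst hV₁ hV₂
  ext i j
  simp [Matrix.mul_apply, Matrix.vecMulVec_apply, Fin.sum_univ_two, dotProduct, Matrix.mulVec]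
  ring_nf
  simp only [hI]
  ring
end

section
/- The dual cone of the separable cone is the cone of block-positive matrices: for a Hermitian matrix M indexed by (Fin d × Fin n), one has Re Tr(M · (p ⊗ q)) ≥ 0 for all PSD p ∈ M_d and PSD q ∈ M_n, if and only if M is block-positive, i.e. ⟨v ⊗ w, M (v ⊗ w)⟩ ≥ 0 for all v ∈ ℂ^d and w ∈ ℂ^n. -/
/-!
A positive semidefinite matrix is a finite sum of rank-one matrices `v v*`, and the Kronecker
product `(v v*) ⊗ (w w*)` is the rank-one matrix `x x*` with `x = v ⊗ w`. Since
`Tr(M (x x*)) = ⟨x, M x⟩` (`trace_mul_kronecker_vecMulVec`), pairing `M` with `p ⊗ q` yields a sum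
of values of the quadratic form of `M` at product vectors, so block-positivity makes the pairing
nonnegative. Conversely, testing on rank-one `p` and `q` gives nonnegative real parts of these
values, and the values are real because `M` is Hermitian.
-/

open Matrix Kronecker ComplexOrder

/-- Pairing `M` with a product of rank-one projectors (up to scale) evaluates the quadratic form
of `M` at the product vector `v ⊗ w`. -/
theorem trace_mul_kronecker_vecMulVec {d n : ℕ}
    (M : Matrix (Fin d × Fin n) (Fin d × Fin n) ℂ) (v : Fin d → ℂ) (w : Fin n → ℂ) :
    (M * (vecMulVec v (star v) ⊗ₖ vecMulVec w (star w))).trace =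
      star (fun p : Fin d × Fin n => v p.1 * w p.2) ⬝ᵥ
        M *ᵥ (fun p : Fin d × Fin n => v p.1 * w p.2) := by
  have h : vecMulVec v (star v) ⊗ₖ vecMulVec w (star w) =
      vecMulVec (fun p : Fin d × Fin n => v p.1 * w p.2)
        (star (fun p : Fin d × Fin n => v p.1 * w p.2)) := by
    ext ⟨i, k⟩ ⟨j, l⟩
    simp only [kroneckerMap_apply, vecMulVec_apply, Pi.star_apply, star_mul']
    ring
  rw [h, mul_vecMulVec, trace_vecMulVec, dotProduct_comm]

/-- The dual cone of the separable cone is the cone of block-positive matrices. -/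
theorem dual_sep_cone_eq_blockPos (d n : ℕ)
    (M : Matrix (Fin d × Fin n) (Fin d × Fin n) ℂ) (hM : M.IsHermitian) :
    (∀ (p : Matrix (Fin d) (Fin d) ℂ) (q : Matrix (Fin n) (Fin n) ℂ),
      p.PosSemidef → q.PosSemidef → 0 ≤ ((M * (p ⊗ₖ q)).trace).re) ↔
    IsBlockPos d n M := by
  constructor
  · intro h v w
    have hre := h _ _ (posSemidef_vecMulVec_self_star v) (posSemidef_vecMulVec_self_star w)
    rw [trace_mul_kronecker_vecMulVec] at hre
    exact Complex.nonneg_iff.mpr ⟨hre, (hM.im_star_dotProduct_mulVec_self _).symm⟩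
  · intro h p q hp hq
    obtain ⟨a, v, rfl⟩ := posSemidef_iff_eq_sum_vecMulVec.mp hp
    obtain ⟨b, w, rfl⟩ := posSemidef_iff_eq_sum_vecMulVec.mp hq
    have hsum : (∑ i, vecMulVec (v i) (star (v i))) ⊗ₖ (∑ j, vecMulVec (w j) (star (w j))) =
        ∑ i, ∑ j, vecMulVec (v i) (star (v i)) ⊗ₖ vecMulVec (w j) (star (w j)) := by
      ext ⟨i, k⟩ ⟨j, l⟩
      simp only [kroneckerMap_apply, Matrix.sum_apply, Finset.sum_mul_sum]
    rw [hsum]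
    simp only [Matrix.mul_sum, trace_sum, trace_mul_kronecker_vecMulVec, Complex.re_sum]
    exact Finset.sum_nonneg fun i _ => Finset.sum_nonneg fun j _ =>
      (Complex.nonneg_iff.mp (h (v i) (w j))).1
end
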